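/- arXiv:1308.0454 — 5 statements merged into one kernel-verified Lean document; each statement's English description precedes it below -/
import Mathlib

section
/- Let W be a signed tropical m×(n+1) matrix and let x ∈ ℝ^{n+1}. Suppose the tangent graph G_x(W) contains a matching between hyperplane nodes I = {i_1,…,i_q} and coordinate nodes J = {j_1,…,j_q}, i.e., the edge between i_p and j_p belongs to G_x(W) for each p ∈ [q] and the i_p are pairwise distinct and the j_p are pairwise distinct. Then the q×q submatrix W' of W with rows I and columns J satisfies tper(|W'|) = Σ_{p=1}^q |W|_{i_p j_p} > −∞, and this maximum in the tropical permanent is attained by the bijection i_p ↦ j_p. -/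
open scoped Classical

noncomputable section

/-- The tropical semiring `ℝ ∪ {−∞}` with max as addition, + as multiplication. -/
abbrev TT : Type := WithBot ℝ

/-- Tropical dot product `max_j (a j + x j)`. -/
def tdot {n : ℕ} (a x : Fin n → TT) : TT :=
  Finset.univ.sup fun j => a j + x j

/-- Tropical permanent of a square matrix over `TT`. -/
def tper {q : ℕ} (M : Fin q → Fin q → TT) : TT :=
  Finset.univ.sup fun σ : Equiv.Perm (Fin q) => ∑ i, M i (σ i)

/-- A square tropical matrix is tropically singular. -/
def TropSingular {q : ℕ} (M : Fin q → Fin q → TT) : Prop :=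
  tper M = ⊥ ∨ ∃ σ π : Equiv.Perm (Fin q), σ ≠ π ∧
    (∑ i, M i (σ i)) = tper M ∧ (∑ i, M i (π i)) = tper M

/-- An (unsigned) tropical matrix is tropically generic. -/
def TropGeneric {m n : ℕ} (M : Fin m → Fin n → TT) : Prop :=
  ∀ (q : ℕ) (r : Fin q → Fin m) (c : Fin q → Fin n),
    Function.Injective r → Function.Injective c →
    tper (fun i j => M (r i) (c j)) = ⊥ ∨ ¬ TropSingular (fun i j => M (r i) (c j))

/-- sign of an entry of a signed tropical matrix. -/
def esign (ap an : TT) : ℤ :=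
  if ap ≠ ⊥ then 1 else if an ≠ ⊥ then -1 else 0

/-- A signed square tropical matrix (pair of matrices) is tropically sign singular. -/
def TropSignSingular {q : ℕ} (Mp Mn : Fin q → Fin q → TT) : Prop :=
  tper (fun i j => max (Mp i j) (Mn i j)) = ⊥ ∨
  ∃ σ π : Equiv.Perm (Fin q),
    (∑ i, max (Mp i (σ i)) (Mn i (σ i))) = tper (fun i j => max (Mp i j) (Mn i j)) ∧
    (∑ i, max (Mp i (π i)) (Mn i (π i))) = tper (fun i j => max (Mp i j) (Mn i j)) ∧
    ((Equiv.Perm.sign σ : ℤ) * ∏ i, esign (Mp i (σ i)) (Mn i (σ i)))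
      ≠ ((Equiv.Perm.sign π : ℤ) * ∏ i, esign (Mp i (π i)) (Mn i (π i)))

/-- A signed tropical matrix is tropically sign generic. -/
def TropSignGeneric {m n : ℕ} (Mp Mn : Fin m → Fin n → TT) : Prop :=
  ∀ (q : ℕ) (r : Fin q → Fin m) (c : Fin q → Fin n),
    Function.Injective r → Function.Injective c →
    tper (fun i j => max (Mp (r i) (c j)) (Mn (r i) (c j))) = ⊥ ∨
    ¬ TropSignSingular (fun i j => Mp (r i) (c j)) (fun i j => Mn (r i) (c j))

/-- Tropical polyhedron `P(A,b)` given by a signed matrix/vector. -/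
def tropP {m n : ℕ} (Ap An : Fin m → Fin n → TT) (bp bn : Fin m → TT) :
    Set (Fin n → TT) :=
  {x | ∀ i, max (tdot (An i) x) (bn i) ≤ max (tdot (Ap i) x) (bp i)}


section Tangent

variable {m n : ℕ} (Wp Wn : Fin m → Fin (n + 1) → TT)

/-- Real vector viewed inside `T^{n+1}`. -/
def toT (x : Fin (n + 1) → ℝ) : Fin (n + 1) → TT := fun j => (x j : TT)

/-- Modulus of the signed matrix `W`. -/
def tmod : Fin m → Fin (n + 1) → TT := fun i j => max (Wp i j) (Wn i j)

/-- `i` is a hyperplane node of the tangent graph at `x`. -/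
def isHypNode (x : Fin (n + 1) → ℝ) (i : Fin m) : Prop :=
  tdot (Wp i) (toT x) = tdot (Wn i) (toT x) ∧ ⊥ < tdot (Wp i) (toT x)

/-- There is an edge between hyperplane node `i` and coordinate node `j`
in the tangent graph at `x`. -/
def isTEdge (x : Fin (n + 1) → ℝ) (i : Fin m) (j : Fin (n + 1)) : Prop :=
  isHypNode Wp Wn x i ∧ tmod Wp Wn i j + (x j : TT) = tdot (tmod Wp Wn i) (toT x)

/-- Vertices of the tangent (di)graph: hyperplane nodes on the left,
coordinate nodes on the right. -/
abbrev TGV (m n : ℕ) : Type := Sum (Fin m) (Fin (n + 1))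

/-- The (undirected) tangent graph at `x`. -/
def tangentGraph (x : Fin (n + 1) → ℝ) : SimpleGraph (TGV m n) :=
  SimpleGraph.fromRel fun u v =>
    match u, v with
    | Sum.inl i, Sum.inr j => isTEdge Wp Wn x i j
    | _, _ => False

/-- The arc relation of the tangent digraph at `x`: the edge between `i` and
`j` is directed from `j` to `i` when `W_{ij}` is tropically positive, and from
`i` to `j` when it is tropically negative. -/
def arcRel (x : Fin (n + 1) → ℝ) : TGV m n → TGV m n → Prop := fun u v =>
  match u, v with
  | Sum.inr j, Sum.inl i => isTEdge Wp Wn x i j ∧ Wp i j ≠ ⊥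
  | Sum.inl i, Sum.inr j => isTEdge Wp Wn x i j ∧ Wn i j ≠ ⊥
  | _, _ => False

end Tangent


/-- A matching in the tangent graph between hyperplane nodes
`I = {i₁,…,i_q}` and coordinate nodes `J = {j₁,…,j_q}` yields a finite tropical
permanent for the corresponding submatrix of `|W|`, attained by the bijection
`i_p ↦ j_p`. -/
theorem stmt2 {m n : ℕ} (Wp Wn : Fin m → Fin (n + 1) → TT)
    (hsign : ∀ i j, min (Wp i j) (Wn i j) = ⊥)
    (x : Fin (n + 1) → ℝ)
    (q : ℕ) (r : Fin q → Fin m) (c : Fin q → Fin (n + 1))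
    (hr : Function.Injective r) (hc : Function.Injective c)
    (hmatch : ∀ p, isTEdge Wp Wn x (r p) (c p)) :
    tper (fun a b => tmod Wp Wn (r a) (c b)) = ∑ p, tmod Wp Wn (r p) (c p) ∧
    ⊥ < ∑ p, tmod Wp Wn (r p) (c p) := by
  have hle : ∀ a j, tmod Wp Wn (r a) j + (x j : TT) ≤
      tmod Wp Wn (r a) (c a) + (x (c a) : TT) := by
    intro a j
    rw [(hmatch a).2]
    exact Finset.le_sup (f := fun j => tmod Wp Wn (r a) j + toT x j) (Finset.mem_univ j)
  have hne : ∀ a, tmod Wp Wn (r a) (c a) ≠ ⊥ := by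
    intro a h
    have h1 := (hmatch a).1.2
    have h2 : tdot (Wp (r a)) (toT x) ≤ ⊥ := by
      refine Finset.sup_le fun j _ => ?_
      have h3 := hle a j
      rw [h, WithBot.bot_add] at h3
      refine le_trans ?_ h3
      exact add_le_add (le_max_left _ _) le_rfl
    exact absurd h1 (not_lt.mpr h2)
  have hsum : ∀ f : Fin q → ℝ, ∑ p, ((f p : ℝ) : TT) = ((∑ p, f p : ℝ) : TT) := by
    intro f
    exact (map_sum (WithBot.addHom : ℝ →+ WithBot ℝ) f Finset.univ).symm
  constructor
  · apply le_antisymm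
    · refine Finset.sup_le fun σ _ => ?_
      have h1 : ∑ a, (tmod Wp Wn (r a) (c (σ a)) + (x (c (σ a)) : TT)) ≤
          ∑ a, (tmod Wp Wn (r a) (c a) + (x (c a) : TT)) :=
        Finset.sum_le_sum fun a _ => hle a _
      rw [Finset.sum_add_distrib, Finset.sum_add_distrib,
        Equiv.sum_comp σ (fun a => (x (c a) : TT)), hsum] at h1
      exact (WithBot.add_le_add_iff_right WithBot.coe_ne_bot).mp h1
    · exact Finset.le_sup (f := fun σ : Equiv.Perm (Fin q) =>
        ∑ i, tmod Wp Wn (r i) (c (σ i))) (Finset.mem_univ 1)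
  · choose f hf using fun a => WithBot.ne_bot_iff_exists.mp (hne a)
    simp_rw [← hf]
    rw [hsum]
    exact WithBot.bot_lt_coe _
end
end

section
/- Let W be a signed tropical m×(n+1) matrix and let x ∈ ℝ^{n+1}. If the tangent graph G_x(W) contains a cycle (in the underlying undirected graph), then W has a square submatrix W' such that tper(|W'|) > −∞ and |W'| is tropically singular. In particular, if W is tropically generic then G_x(W) is a forest. -/
open scoped Classical

noncomputable section

lemma tper_aux {q : ℕ} (M : Fin q → Fin q → TT) (d y : Fin q → ℝ)
    (hle : ∀ i j, M i j ≤ ((d i - y j : ℝ) : TT)) (σ π : Equiv.Perm (Fin q)) (hne : σ ≠ π)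
    (hσ : ∀ i, M i (σ i) = ((d i - y (σ i) : ℝ) : TT))
    (hπ : ∀ i, M i (π i) = ((d i - y (π i) : ℝ) : TT)) :
    ⊥ < tper M ∧ TropSingular M := by
  have hcoe : ∀ f : Fin q → ℝ, (∑ i, ((f i : ℝ) : TT)) = ((∑ i, f i : ℝ) : TT) := by
    intro f
    exact (map_sum (WithBot.addHom : ℝ →+ WithBot ℝ) f Finset.univ).symm
  have hsum : ∀ τ : Equiv.Perm (Fin q),
      (∑ i, (((d i - y (τ i) : ℝ)) : TT)) = ((∑ i, d i - ∑ i, y i : ℝ) : TT) := by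
    intro τ
    rw [hcoe, Finset.sum_sub_distrib, Equiv.sum_comp τ y]
  have hS : (∑ i, M i (σ i)) = ((∑ i, d i - ∑ i, y i : ℝ) : TT) := by
    rw [← hsum σ]; exact Finset.sum_congr rfl fun i _ => hσ i
  have hP : (∑ i, M i (π i)) = ((∑ i, d i - ∑ i, y i : ℝ) : TT) := by
    rw [← hsum π]; exact Finset.sum_congr rfl fun i _ => hπ i
  have hT : tper M = ((∑ i, d i - ∑ i, y i : ℝ) : TT) := by
    apply le_antisymm
    · refine Finset.sup_le fun τ _ => ?_
      rw [← hsum τ]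
      exact Finset.sum_le_sum fun i _ => hle i (τ i)
    · rw [← hS]
      exact Finset.le_sup (f := fun σ : Equiv.Perm (Fin q) => ∑ i, M i (σ i)) (Finset.mem_univ σ)
  refine ⟨?_, Or.inr ⟨σ, π, hne, ?_, ?_⟩⟩
  · rw [hT]; exact WithBot.bot_lt_coe _
  · rw [hT, hS]
  · rw [hT, hP]

lemma tdot_real {m n : ℕ} (Wp Wn : Fin m → Fin (n + 1) → TT) (x : Fin (n + 1) → ℝ) (i : Fin m)
    (h : isHypNode Wp Wn x i) : ∃ d : ℝ, tdot (tmod Wp Wn i) (toT x) = (d : TT) := by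
  have h1 : tdot (Wp i) (toT x) ≤ tdot (tmod Wp Wn i) (toT x) := by
    refine Finset.sup_mono_fun fun j _ => ?_
    exact add_le_add_left (le_max_left _ _) _
  have h2 : tdot (tmod Wp Wn i) (toT x) ≠ ⊥ := (lt_of_lt_of_le h.2 h1).ne'
  obtain ⟨d, hd⟩ := WithBot.ne_bot_iff_exists.mp h2
  exact ⟨d, hd.symm⟩

lemma add_coe_le {a : TT} {y d : ℝ} : a + (y : TT) ≤ (d : TT) → a ≤ ((d - y : ℝ) : TT) := by
  induction a using WithBot.recBotCoe with
  | bot => intro _; exact bot_le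
  | coe a =>
    intro h
    rw [← WithBot.coe_add, WithBot.coe_le_coe] at h
    rw [WithBot.coe_le_coe]; linarith

lemma add_coe_eq {a : TT} {y d : ℝ} : a + (y : TT) = (d : TT) → a = ((d - y : ℝ) : TT) := by
  induction a using WithBot.recBotCoe with
  | bot => intro h; simp at h
  | coe a =>
    intro h
    rw [← WithBot.coe_add, WithBot.coe_inj] at h
    rw [WithBot.coe_inj]; linarith

lemma tg_inl {m n : ℕ} {Wp Wn : Fin m → Fin (n + 1) → TT} {x : Fin (n + 1) → ℝ} {i : Fin m}
    {v : TGV m n} (h : (tangentGraph Wp Wn x).Adj (Sum.inl i) v) :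
    ∃ j, v = Sum.inr j ∧ isTEdge Wp Wn x i j := by
  rcases v with k | j
  · simp [tangentGraph] at h
  · simp [tangentGraph] at h
    exact ⟨j, rfl, h⟩

lemma tg_inr {m n : ℕ} {Wp Wn : Fin m → Fin (n + 1) → TT} {x : Fin (n + 1) → ℝ} {j : Fin (n + 1)}
    {v : TGV m n} (h : (tangentGraph Wp Wn x).Adj (Sum.inr j) v) :
    ∃ i, v = Sum.inl i ∧ isTEdge Wp Wn x i j := by
  rcases v with k | j
  · simp [tangentGraph] at h
    exact ⟨k, rfl, h⟩
  · simp [tangentGraph] at h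

lemma from_cycle {m n : ℕ} (Wp Wn : Fin m → Fin (n + 1) → TT) (x : Fin (n + 1) → ℝ) (i₀ : Fin m)
    (w : (tangentGraph Wp Wn x).Walk (Sum.inl i₀) (Sum.inl i₀)) (hw : w.IsCycle) :
      ∃ (q : ℕ) (r : Fin q → Fin m) (c : Fin q → Fin (n + 1)),
        Function.Injective r ∧ Function.Injective c ∧
        ⊥ < tper (fun a b => tmod Wp Wn (r a) (c b)) ∧
        TropSingular (fun a b => tmod Wp Wn (r a) (c b)) := by
  have hpar : ∀ k, 2 * k ≤ w.length → ∃ i, w.getVert (2 * k) = Sum.inl i := by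
    intro k
    induction k with
    | zero => intro _; exact ⟨i₀, by simp⟩
    | succ k ih =>
      intro hk
      obtain ⟨i, hi⟩ := ih (by omega)
      have h1 := w.adj_getVert_succ (i := 2 * k) (by omega)
      rw [hi] at h1
      obtain ⟨j, hj, _⟩ := tg_inl h1
      have h2 := w.adj_getVert_succ (i := 2 * k + 1) (by omega)
      rw [hj] at h2
      obtain ⟨i', hi', _⟩ := tg_inr h2
      exact ⟨i', hi'⟩
  have hodd : ∀ k, 2 * k + 1 ≤ w.length → ∃ j, w.getVert (2 * k + 1) = Sum.inr j := by
    intro k hk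
    obtain ⟨i, hi⟩ := hpar k (by omega)
    have h1 := w.adj_getVert_succ (i := 2 * k) (by omega)
    rw [hi] at h1
    obtain ⟨j, hj, _⟩ := tg_inl h1
    exact ⟨j, hj⟩
  have h3 := hw.three_le_length
  obtain ⟨q, hq⟩ : ∃ q, w.length = 2 * (q + 2) := by
    rcases Nat.even_or_odd' w.length with ⟨k, hk | hk⟩
    · exact ⟨k - 2, by omega⟩
    · obtain ⟨j, hj⟩ := hodd k (by omega)
      rw [← hk, SimpleGraph.Walk.getVert_length] at hj
      cases hj
  have hr : ∀ a : Fin (q + 2), ∃ i, w.getVert (2 * a) = Sum.inl i := fun a => hpar a (by omega)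
  have hc : ∀ a : Fin (q + 2), ∃ j, w.getVert (2 * a + 1) = Sum.inr j :=
    fun a => hodd a (by omega)
  choose r hr using hr
  choose c hc using hc
  have e1 : ∀ a, isTEdge Wp Wn x (r a) (c a) := by
    intro a
    have h1 := w.adj_getVert_succ (i := 2 * a) (by omega)
    rw [hr, hc] at h1
    obtain ⟨j, hj, h⟩ := tg_inl h1
    cases hj; exact h
  have e2 : ∀ a, isTEdge Wp Wn x (r (finRotate _ a)) (c a) := by
    intro a
    have h1 := w.adj_getVert_succ (i := 2 * a + 1) (by omega)
    have h2 : w.getVert (2 * a + 1 + 1) = Sum.inl (r (finRotate _ a)) := by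
      rw [← hr]
      by_cases ha : a = Fin.last _
      · subst ha
        rw [finRotate_last]
        have : 2 * ((Fin.last (q + 1) : Fin (q + 2)) : ℕ) + 1 + 1 = w.length := by
          rw [hq]; simp; ring
        rw [this]; simp
      · rw [coe_finRotate_of_ne_last ha]; rfl
    rw [hc, h2] at h1
    obtain ⟨j, hj, h⟩ := tg_inr h1
    cases hj; exact h
  have hinj := hw.getVert_injOn'
  refine ⟨q + 2, r, c, ?_, ?_, ?_⟩
  · intro a b hab
    have : w.getVert (2 * a) = w.getVert (2 * b) := by rw [hr, hr, hab]
    have := hinj (by simp; omega) (by simp; omega) this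
    omega
  · intro a b hab
    have : w.getVert (2 * a + 1) = w.getVert (2 * b + 1) := by rw [hc, hc, hab]
    have := hinj (by simp; omega) (by simp; omega) this
    omega
  · choose d hd using fun a => tdot_real Wp Wn x (r a) (e1 a).1
    refine tper_aux _ d (fun a => x (c a)) ?_ (Equiv.refl _) (finRotate (q + 2)).symm ?_ ?_ ?_
    · intro i j
      apply add_coe_le
      rw [← hd]
      exact Finset.le_sup (f := fun j => tmod Wp Wn (r i) j + toT x j) (Finset.mem_univ (c j))
    · intro h
      have := congrArg (fun σ : Equiv.Perm (Fin (q + 2)) => σ (finRotate (q + 2) 0)) h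
      simp at this
    · intro i
      apply add_coe_eq
      rw [← hd]; exact (e1 i).2
    · intro i
      apply add_coe_eq
      rw [← hd]
      have := (e2 ((finRotate (q + 2)).symm i)).2
      rwa [Equiv.apply_symm_apply] at this

/-- If the tangent graph at a finite point contains an
(undirected) cycle, then `W` has a square submatrix `W'` with
`tper(|W'|) > −∞` and `|W'|` tropically singular. In particular, if `W` is
tropically generic then the tangent graph is a forest. -/
theorem stmt3 {m n : ℕ} (Wp Wn : Fin m → Fin (n + 1) → TT)
    (hsign : ∀ i j, min (Wp i j) (Wn i j) = ⊥)
    (x : Fin (n + 1) → ℝ) :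
    (¬ (tangentGraph Wp Wn x).IsAcyclic →
      ∃ (q : ℕ) (r : Fin q → Fin m) (c : Fin q → Fin (n + 1)),
        Function.Injective r ∧ Function.Injective c ∧
        ⊥ < tper (fun a b => tmod Wp Wn (r a) (c b)) ∧
        TropSingular (fun a b => tmod Wp Wn (r a) (c b))) ∧
    (TropGeneric (tmod Wp Wn) → (tangentGraph Wp Wn x).IsAcyclic) := by
  have main : ¬ (tangentGraph Wp Wn x).IsAcyclic →
      ∃ (q : ℕ) (r : Fin q → Fin m) (c : Fin q → Fin (n + 1)),
        Function.Injective r ∧ Function.Injective c ∧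
        ⊥ < tper (fun a b => tmod Wp Wn (r a) (c b)) ∧
        TropSingular (fun a b => tmod Wp Wn (r a) (c b)) := by
    intro h
    simp only [SimpleGraph.IsAcyclic, not_forall, not_not] at h
    obtain ⟨v, w, hw⟩ := h
    rcases v with i | j
    · exact from_cycle Wp Wn x i w hw
    · have h3 := hw.three_le_length
      have h1 := w.adj_getVert_succ (i := 0) (by omega)
      rw [SimpleGraph.Walk.getVert_zero] at h1
      obtain ⟨i, hi, _⟩ := tg_inr h1
      have hm : Sum.inl i ∈ w.support := by
        rw [← hi]; exact w.getVert_mem_support _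
      exact from_cycle Wp Wn x i (w.rotate _ hm) (hw.rotate hm)
  refine ⟨main, fun hg => ?_⟩
  by_contra h
  obtain ⟨q, r, c, hr, hc, hb, hs⟩ := main h
  rcases hg q r c hr hc with h' | h'
  · exact hb.ne' h'
  · exact h' hs
end
end

section
/- Let W be a signed tropical m×(n+1) matrix and let x ∈ ℝ^{n+1}. If the tangent digraph D_x(W) contains a directed cycle, then W has a square submatrix W' with tper(|W'|) > −∞ that is tropically sign singular. In particular, if W is tropically sign generic then D_x(W) is acyclic. -/
open scoped Classical

noncomputable section

def Chn {I J : Type} (pos neg : J → I → Prop) (q : ℕ) (p : ℕ → J × I) : Prop :=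
  (∀ k ≤ q, pos (p k).1 (p k).2) ∧ (∀ k < q, neg (p (k+1)).1 (p k).2)

lemma Chn.window {I J : Type} {pos neg : J → I → Prop} {q : ℕ} {p : ℕ → J × I}
    (h : Chn pos neg q p) (a l : ℕ) (hl : a + l ≤ q) : Chn pos neg l (fun k => p (a + k)) :=
  ⟨fun k hk => h.1 (a + k) (by omega), fun k hk => h.2 (a + k) (by omega)⟩

lemma exists_simple {I J : Type} (pos neg : J → I → Prop)
    (h : ∃ q p, Chn pos neg q p ∧ neg (p 0).1 (p q).2) :
    ∃ q p, Chn pos neg q p ∧ neg (p 0).1 (p q).2 ∧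
      (∀ a b, a < b → b ≤ q → (p a).1 ≠ (p b).1) ∧ (∀ a b, a < b → b ≤ q → (p a).2 ≠ (p b).2) := by
  classical
  obtain ⟨p, hp, hc⟩ := Nat.find_spec h
  refine ⟨Nat.find h, p, hp, hc, ?_, ?_⟩
  · intro a b hab hb he
    refine Nat.find_min h (m := b - a - 1) (by omega)
      ⟨_, hp.window a (b - a - 1) (by omega), ?_⟩
    have := hp.2 (b-1) (by omega)
    have e1 : b - 1 + 1 = b := by omega
    have e2 : a + (b - a - 1) = b - 1 := by omega
    rw [e1] at this
    simp only [e2, add_zero, he]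
    exact this
  · intro a b hab hb he
    refine Nat.find_min h (m := b - a - 1) (by omega)
      ⟨_, hp.window (a+1) (b - a - 1) (by omega), ?_⟩
    have := hp.2 a (by omega)
    have e2 : a + 1 + (b - a - 1) = b := by omega
    simp only [e2, add_zero, ← he]
    exact this

lemma Chn.extend {I J : Type} {pos neg : J → I → Prop} {q : ℕ} {p : ℕ → J × I}
    (h : Chn pos neg q p) (j : J) (i : I) (hn : neg j (p q).2) (hp : pos j i) :
    Chn pos neg (q+1) (fun k => if k ≤ q then p k else (j, i)) := by
  constructor
  · intro k hk
    by_cases hkq : k ≤ q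
    · simpa [hkq] using h.1 k hkq
    · simpa [hkq] using hp
  · intro k hk
    by_cases hkq : k < q
    · have h1 : k + 1 ≤ q := hkq
      have h2 : k ≤ q := by omega
      simpa only [h1, h2, if_true] using h.2 k hkq
    · obtain rfl : k = q := by omega
      simpa using hn

def posR {m n : ℕ} (Wp Wn : Fin m → Fin (n + 1) → TT) (x : Fin (n + 1) → ℝ)
    (j : Fin (n+1)) (i : Fin m) : Prop := isTEdge Wp Wn x i j ∧ Wp i j ≠ ⊥
def negR {m n : ℕ} (Wp Wn : Fin m → Fin (n + 1) → TT) (x : Fin (n + 1) → ℝ)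
    (j : Fin (n+1)) (i : Fin m) : Prop := isTEdge Wp Wn x i j ∧ Wn i j ≠ ⊥

lemma chain_of {m n : ℕ} (Wp Wn : Fin m → Fin (n + 1) → TT) (x : Fin (n + 1) → ℝ)
    (j : Fin (n+1)) (w : TGV m n) (h : Relation.TransGen (arcRel Wp Wn x) (Sum.inr j) w) :
    ∃ q p, Chn (posR Wp Wn x) (negR Wp Wn x) q p ∧ (p 0).1 = j ∧
      (∀ i, w = Sum.inl i → (p q).2 = i) ∧ (∀ j', w = Sum.inr j' → negR Wp Wn x j' (p q).2) := by
  induction h with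
  | @single w h =>
    rcases w with i | j'
    · refine ⟨0, fun _ => (j, i), ⟨fun k _ => h, fun k hk => by omega⟩, rfl, ?_, ?_⟩
      · rintro i' ⟨⟩; rfl
      · rintro j' ⟨⟩
    · exact h.elim
  | @tail u w _ h ih =>
    obtain ⟨q, p, hp, h0, h1, h2⟩ := ih
    rcases u with i | j'
    · rcases w with i' | j''
      · exact h.elim
      · refine ⟨q, p, hp, h0, ?_, ?_⟩
        · rintro i' ⟨⟩
        · rintro _ ⟨⟩
          rw [h1 i rfl]
          exact h
    · rcases w with i' | j''
      · refine ⟨q+1, _, hp.extend j' i' (h2 j' rfl) h, ?_, ?_, ?_⟩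
        · simpa using h0
        · rintro _ ⟨⟩; simp
        · rintro _ ⟨⟩
      · exact h.elim

lemma cyc_of {m n : ℕ} (Wp Wn : Fin m → Fin (n + 1) → TT) (x : Fin (n + 1) → ℝ)
    (v : TGV m n) (h : Relation.TransGen (arcRel Wp Wn x) v v) :
    ∃ q p, Chn (posR Wp Wn x) (negR Wp Wn x) q p ∧ negR Wp Wn x (p 0).1 (p q).2 := by
  rcases v with i | j
  · rw [Relation.TransGen.head'_iff] at h
    obtain ⟨w, h1, h2⟩ := h
    rcases w with i' | j
    · exact h1.elim
    · rw [Relation.reflTransGen_iff_eq_or_transGen] at h2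
      rcases h2 with h2 | h2
      · cases h2
      · obtain ⟨q, p, hp, h0, h3, -⟩ := chain_of Wp Wn x j _ h2
        refine ⟨q, p, hp, ?_⟩
        rw [h0, h3 i rfl]
        exact h1
  · obtain ⟨q, p, hp, h0, -, h3⟩ := chain_of Wp Wn x j _ h
    refine ⟨q, p, hp, ?_⟩
    rw [h0]; exact h3 j rfl

lemma perm_opt {q : ℕ} (M : Fin q → Fin q → TT) (y : Fin q → ℝ) (T : Fin q → TT)
    (hle : ∀ a b, M a b + (y b : TT) ≤ T a) (σ : Equiv.Perm (Fin q))
    (hσ : ∀ a, M a (σ a) + (y (σ a) : TT) = T a) :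
    ∑ a, M a (σ a) = tper M := by
  refine le_antisymm (Finset.le_sup (f := fun σ : Equiv.Perm (Fin q) => ∑ i, M i (σ i))
    (Finset.mem_univ σ)) (Finset.sup_le fun τ _ => ?_)
  have hY : ∀ τ : Equiv.Perm (Fin q), ∑ a, (y (τ a) : TT) = ((∑ a, y a : ℝ) : TT) := by
    intro τ
    rw [Equiv.sum_comp τ (fun a => (y a : TT))]
    exact (map_sum (WithBot.addHom : ℝ →+ WithBot ℝ) y Finset.univ).symm
  have : ∑ a, M a (τ a) + ((∑ a, y a : ℝ) : TT) ≤ ∑ a, M a (σ a) + ((∑ a, y a : ℝ) : TT) := by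
    conv_lhs => rw [← hY τ]
    rw [← hY σ, ← Finset.sum_add_distrib, ← Finset.sum_add_distrib]
    exact Finset.sum_le_sum fun a _ => (hle a (τ a)).trans (hσ a).ge
  exact WithBot.le_of_add_le_add_right WithBot.coe_ne_bot this

lemma main_ex {m n : ℕ} (Wp Wn : Fin m → Fin (n + 1) → TT)
    (hsign : ∀ i j, min (Wp i j) (Wn i j) = ⊥)
    (x : Fin (n + 1) → ℝ) (h : ∃ v : TGV m n, Relation.TransGen (arcRel Wp Wn x) v v) :
      ∃ (q : ℕ) (r : Fin q → Fin m) (c : Fin q → Fin (n + 1)),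
        Function.Injective r ∧ Function.Injective c ∧
        ⊥ < tper (fun a b => tmod Wp Wn (r a) (c b)) ∧
        TropSignSingular (fun a b => Wp (r a) (c b)) (fun a b => Wn (r a) (c b)) := by
  obtain ⟨v, hv⟩ := h
  obtain ⟨q, p, hp, hc, hJ, hI⟩ := exists_simple _ _ (cyc_of Wp Wn x v hv)
  have inj : ∀ {α : Type} (f : ℕ → α), (∀ a b, a < b → b ≤ q → f a ≠ f b) →
      Function.Injective (fun a : Fin (q+1) => f a) := by
    intro α f hf a b hab
    rcases lt_trichotomy (a : ℕ) b with h | h | h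
    · exact (hf _ _ h (by omega) hab).elim
    · exact Fin.ext h
    · exact (hf _ _ h (by omega) hab.symm).elim
  have hneg : ∀ a : Fin (q+1), negR Wp Wn x (p (finRotate (q+1) a)).1 (p a).2 := by
    intro a
    by_cases ha : a = Fin.last q
    · subst ha
      rw [finRotate_last]
      simpa using hc
    · rw [coe_finRotate_of_ne_last ha]
      exact hp.2 a (by have := Fin.val_lt_last ha; simpa using this)
  have hpos : ∀ a : Fin (q+1), posR Wp Wn x (p a).1 (p a).2 := fun a => hp.1 a (by omega)
  have key := perm_opt (fun a b : Fin (q+1) => tmod Wp Wn (p a).2 (p b).1)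
    (fun b => x (p b).1) (fun a => tdot (tmod Wp Wn (p a).2) (toT x))
    (fun a b => Finset.le_sup (f := fun j => tmod Wp Wn (p a).2 j + toT x j) (Finset.mem_univ _))
  have k1 := key 1 (fun a => (hpos a).1.2)
  have k2 := key (finRotate (q+1)) (fun a => (hneg a).1.2)
  refine ⟨q+1, fun a => (p a).2, fun a => (p a).1, inj _ hI, inj _ hJ, ?_, Or.inr
    ⟨1, finRotate (q+1), k1, k2, ?_⟩⟩
  · rw [← k1, bot_lt_iff_ne_bot, Ne, WithBot.sum_eq_bot_iff]
    rintro ⟨a, -, ha⟩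
    simp only [tmod, Equiv.Perm.coe_one, id, max_eq_bot] at ha
    exact (hpos a).2 ha.1
  · have e1 : ∀ a : Fin (q+1), esign (Wp (p a).2 (p a).1) (Wn (p a).2 (p a).1) = 1 := by
      intro a; rw [esign, if_pos (hpos a).2]
    have e2 : ∀ a : Fin (q+1), esign (Wp (p a).2 (p (finRotate (q+1) a)).1)
        (Wn (p a).2 (p (finRotate (q+1) a)).1) = -1 := by
      intro a
      have h1 := (hneg a).2
      have h2 := (min_eq_bot.1 (hsign (p a).2 (p (finRotate (q+1) a)).1)).resolve_right h1
      rw [esign, if_neg (not_not.2 h2), if_pos h1]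
    simp only [e2, Equiv.Perm.coe_one, id, e1]
    rw [sign_finRotate]
    simp only [Finset.prod_const, Finset.card_univ, Fintype.card_fin, Equiv.Perm.sign_one]
    push_cast
    rw [← pow_add, show q + (q+1) = 2 * q + 1 by ring,
      Odd.neg_one_pow ⟨q, rfl⟩]
    norm_num

/-- If the tangent digraph at a finite point contains a
directed cycle, then `W` has a square submatrix `W'` with `tper(|W'|) > −∞`
that is tropically sign singular. In particular, if `W` is tropically sign
generic then the tangent digraph is acyclic. -/
theorem stmt4 {m n : ℕ} (Wp Wn : Fin m → Fin (n + 1) → TT)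
    (hsign : ∀ i j, min (Wp i j) (Wn i j) = ⊥)
    (x : Fin (n + 1) → ℝ) :
    ((∃ v : TGV m n, Relation.TransGen (arcRel Wp Wn x) v v) →
      ∃ (q : ℕ) (r : Fin q → Fin m) (c : Fin q → Fin (n + 1)),
        Function.Injective r ∧ Function.Injective c ∧
        ⊥ < tper (fun a b => tmod Wp Wn (r a) (c b)) ∧
        TropSignSingular (fun a b => Wp (r a) (c b)) (fun a b => Wn (r a) (c b))) ∧
    (TropSignGeneric Wp Wn → ∀ v : TGV m n, ¬ Relation.TransGen (arcRel Wp Wn x) v v) := by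
  refine ⟨main_ex Wp Wn hsign x, fun hg v hv => ?_⟩
  obtain ⟨q, r, c, hr, hc, ht, hs⟩ := main_ex Wp Wn hsign x ⟨v, hv⟩
  rcases hg q r c hr hc with h | h
  · exact ht.ne' h
  · exact h hs
end
end

section
/- Let W be a signed tropical m×(n+1) matrix whose i-th row has an entry different from −∞, let x ∈ ℝ^{n+1}, and let J ⊆ [n+1] with ∅ ⊊ J ⊊ [n+1]. Then: (i) if Wᵢ⁺⊙x > Wᵢ⁻⊙x, then every direction e^J is feasible from x in the half-space Hᵢ^≥; (ii) if Wᵢ⁺⊙x = Wᵢ⁻⊙x, then e^J is feasible from x in Hᵢ^≥ if and only if argmax_j(W⁺_{ij}+x_j) ∩ J ≠ ∅ or argmax_j(W⁻_{ij}+x_j) ∩ J = ∅; (iii) if Wᵢ⁺⊙x = Wᵢ⁻⊙x, then e^J is feasible from x in the s-hyperplane Hᵢ if and only if the sets argmax_j(W⁺_{ij}+x_j) ∩ J and argmax_j(W⁻_{ij}+x_j) ∩ J are both empty or both nonempty. -/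
open scoped Classical

noncomputable section

section Pivot

variable {m n : ℕ}

/-- The tropical cone `C = {x : Wᵢ⁺⊙x ≥ Wᵢ⁻⊙x for all i}`. -/
def coneC (Wp Wn : Fin m → Fin (n + 1) → TT) : Set (Fin (n + 1) → TT) :=
  {x | ∀ i, tdot (Wn i) x ≤ tdot (Wp i) x}

/-- The `i`-th s-hyperplane `Hᵢ`. -/
def hypHS (Wp Wn : Fin m → Fin (n + 1) → TT) (i : Fin m) : Set (Fin (n + 1) → TT) :=
  {x | tdot (Wp i) x = tdot (Wn i) x}

/-- The `i`-th half-space `Hᵢ^≥`. -/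
def halfHS (Wp Wn : Fin m → Fin (n + 1) → TT) (i : Fin m) : Set (Fin (n + 1) → TT) :=
  {x | tdot (Wn i) x ≤ tdot (Wp i) x}

/-- The tropical edge `E_K = ⋂_{i ∈ K} Hᵢ ∩ C` (as a set). -/
def edgeEK (Wp Wn : Fin m → Fin (n + 1) → TT) (K : Finset (Fin m)) :
    Set (Fin (n + 1) → TT) :=
  {x | (∀ i ∈ K, x ∈ hypHS Wp Wn i) ∧ x ∈ coneC Wp Wn}

/-- Indicator vector `e^J` of `J ⊆ [n+1]`. -/
def eJ (J : Finset (Fin (n + 1))) : Fin (n + 1) → ℝ := fun j => if j ∈ J then 1 else 0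

/-- `e^J` (with `∅ ⊊ J ⊊ [n+1]`) is a feasible direction from `x` in `D`. -/
def Feasible (D : Set (Fin (n + 1) → TT)) (x : Fin (n + 1) → ℝ)
    (J : Finset (Fin (n + 1))) : Prop :=
  J ≠ ∅ ∧ J ≠ Finset.univ ∧
    ∃ μ : ℝ, 0 < μ ∧ ∀ lam : ℝ, 0 ≤ lam → lam ≤ μ → toT (x + lam • eJ J) ∈ D

/-- `{ξ + λ e^J : 0 ≤ λ ≤ μ}` is an ordinary segment of the tropical edge
`E_K`: it is contained in `E_K` and is maximal in the direction `e^J`. -/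
def IsOrdSeg (Wp Wn : Fin m → Fin (n + 1) → TT) (K : Finset (Fin m))
    (ξ : Fin (n + 1) → ℝ) (J : Finset (Fin (n + 1))) (μ : ℝ) : Prop :=
  0 < μ ∧ J ≠ ∅ ∧ J ≠ Finset.univ ∧
  (∀ lam : ℝ, 0 ≤ lam → lam ≤ μ → toT (ξ + lam • eJ J) ∈ edgeEK Wp Wn K) ∧
  (∀ ε : ℝ, 0 < ε → toT (ξ - ε • eJ J) ∉ edgeEK Wp Wn K) ∧
  (∀ ε : ℝ, 0 < ε → toT (ξ + (μ + ε) • eJ J) ∉ edgeEK Wp Wn K)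

/-- `x` is a breakpoint of `E_K`: an intermediate endpoint shared by two
consecutive ordinary segments. -/
def IsBreakpoint (Wp Wn : Fin m → Fin (n + 1) → TT) (K : Finset (Fin m))
    (x : Fin (n + 1) → ℝ) : Prop :=
  ∃ ξ J μ, IsOrdSeg Wp Wn K ξ J μ ∧ x = ξ + μ • eJ J ∧
    ∃ J' μ', IsOrdSeg Wp Wn K x J' μ' ∧ J ⊂ J'

/-- `x` lies in the relative interior of an ordinary segment of `E_K`. -/
def InRelIntSeg (Wp Wn : Fin m → Fin (n + 1) → TT) (K : Finset (Fin m))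
    (x : Fin (n + 1) → ℝ) : Prop :=
  ∃ ξ J μ, IsOrdSeg Wp Wn K ξ J μ ∧ ∃ lam : ℝ, 0 < lam ∧ lam < μ ∧ x = ξ + lam • eJ J

/-- Embedding of `TT = ℝ ∪ {−∞}` into `EReal`. -/
def tE : TT → EReal := WithBot.recBotCoe ⊥ (fun r => (r : EReal))

/-- `λ⁺_i(ξ,J) = (Wᵢ⁺⊙ξ) − max_{j∈J}(W⁺_{ij} + ξ_j)`, with `−(−∞) = +∞`. -/
def lamP (Wp : Fin m → Fin (n + 1) → TT) (i : Fin m) (ξ : Fin (n + 1) → ℝ)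
    (J : Finset (Fin (n + 1))) : EReal :=
  tE (tdot (Wp i) (toT ξ)) - tE (J.sup fun j => Wp i j + (ξ j : TT))

/-- `λ⁻_i(ξ,J) = (Wᵢ⁺⊙ξ) − max_{j∈J}(W⁻_{ij} + ξ_j)`, with `−(−∞) = +∞`. -/
def lamM (Wp Wn : Fin m → Fin (n + 1) → TT) (i : Fin m) (ξ : Fin (n + 1) → ℝ)
    (J : Finset (Fin (n + 1))) : EReal :=
  tE (tdot (Wp i) (toT ξ)) - tE (J.sup fun j => Wn i j + (ξ j : TT))

/-- `argmax(Wᵢ⁺⊙ξ)`. -/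
def argmaxP (Wp : Fin m → Fin (n + 1) → TT) (i : Fin m) (ξ : Fin (n + 1) → ℝ) :
    Set (Fin (n + 1)) :=
  {j | Wp i j + (ξ j : TT) = tdot (Wp i) (toT ξ)}

/-- `argmax(Wᵢ⁻⊙ξ)`. -/
def argmaxM (Wn : Fin m → Fin (n + 1) → TT) (i : Fin m) (ξ : Fin (n + 1) → ℝ) :
    Set (Fin (n + 1)) :=
  {j | Wn i j + (ξ j : TT) = tdot (Wn i) (toT ξ)}

/-- `Λ(ξ,J)`: candidate entering constraints. -/
def entSet (Wp : Fin m → Fin (n + 1) → TT) (K : Finset (Fin m))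
    (ξ : Fin (n + 1) → ℝ) (J : Finset (Fin (n + 1))) : Set (Fin m) :=
  {i | i ∉ K ∧ ∀ j ∈ J, j ∉ argmaxP Wp i ξ}

/-- `B(ξ,J)`: candidate breakpoint constraints. -/
def brkSet (Wp Wn : Fin m → Fin (n + 1) → TT) (K : Finset (Fin m))
    (ξ : Fin (n + 1) → ℝ) (J : Finset (Fin (n + 1))) : Set (Fin m) :=
  {i | i ∈ K ∧ (∀ j ∈ J, j ∉ argmaxP Wp i ξ) ∧ ∀ j ∈ J, j ∉ argmaxM Wn i ξ}

/-- Coordinate nodes with an arc into hyperplane node `i`. -/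
def degIn (Wp Wn : Fin m → Fin (n + 1) → TT) (x : Fin (n + 1) → ℝ) (i : Fin m) :
    Set (Fin (n + 1)) :=
  {j | arcRel Wp Wn x (Sum.inr j) (Sum.inl i)}

/-- Coordinate nodes with an arc out of hyperplane node `i`. -/
def degOut (Wp Wn : Fin m → Fin (n + 1) → TT) (x : Fin (n + 1) → ℝ) (i : Fin m) :
    Set (Fin (n + 1)) :=
  {j | arcRel Wp Wn x (Sum.inl i) (Sum.inr j)}

/-- Hyperplane node `i` has degree `(1,1)` in the tangent digraph at `x`. -/
def deg11 (Wp Wn : Fin m → Fin (n + 1) → TT) (x : Fin (n + 1) → ℝ) (i : Fin m) : Prop :=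
  (∃! j, j ∈ degIn Wp Wn x i) ∧ (∃! j, j ∈ degOut Wp Wn x i)

/-- Hyperplane node `i` has degree `(2,1)`. -/
def deg21 (Wp Wn : Fin m → Fin (n + 1) → TT) (x : Fin (n + 1) → ℝ) (i : Fin m) : Prop :=
  (degIn Wp Wn x i).ncard = 2 ∧ (∃! j, j ∈ degOut Wp Wn x i)

/-- Hyperplane node `i` has degree `(1,2)`. -/
def deg12 (Wp Wn : Fin m → Fin (n + 1) → TT) (x : Fin (n + 1) → ℝ) (i : Fin m) : Prop :=
  (∃! j, j ∈ degIn Wp Wn x i) ∧ (degOut Wp Wn x i).ncard = 2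

/-- The support of the tangent graph at `x`: all coordinate nodes together
with the hyperplane nodes. -/
def suppV (Wp Wn : Fin m → Fin (n + 1) → TT) (x : Fin (n + 1) → ℝ) : Set (TGV m n) :=
  {v | match v with
       | Sum.inl i => isHypNode Wp Wn x i
       | Sum.inr _ => True}

/-- The underlying undirected edge relation of the tangent graph. -/
def tedgeRel (Wp Wn : Fin m → Fin (n + 1) → TT) (x : Fin (n + 1) → ℝ) :
    TGV m n → TGV m n → Prop := fun u v =>
  match u, v with
  | Sum.inl i, Sum.inr j => isTEdge Wp Wn x i j
  | _, _ => False

/-- The tangent graph with the hyperplane node `ℓ` (and its incident edges)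
deleted. -/
def delNode (Wp Wn : Fin m → Fin (n + 1) → TT) (x : Fin (n + 1) → ℝ) (ℓ : Fin m) :
    SimpleGraph (TGV m n) :=
  SimpleGraph.fromRel fun u v =>
    tedgeRel Wp Wn x u v ∧ u ≠ Sum.inl ℓ ∧ v ≠ Sum.inl ℓ

/-- The tangent graph with the edge between hyperplane node `k` and coordinate
node `j` deleted. -/
def delEdge (Wp Wn : Fin m → Fin (n + 1) → TT) (x : Fin (n + 1) → ℝ) (k : Fin m)
    (j : Fin (n + 1)) : SimpleGraph (TGV m n) :=
  SimpleGraph.fromRel fun u v =>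
    tedgeRel Wp Wn x u v ∧ ¬(u = Sum.inl k ∧ v = Sum.inr j)

/-- Coordinate nodes weakly connected to hyperplane node `k` after deleting the
edge between `k` and `j`. -/
def reachJ (Wp Wn : Fin m → Fin (n + 1) → TT) (x : Fin (n + 1) → ℝ) (k : Fin m)
    (j : Fin (n + 1)) : Finset (Fin (n + 1)) :=
  Finset.univ.filter fun l => (delEdge Wp Wn x k j).Reachable (Sum.inl k) (Sum.inr l)

end Pivot

theorem aux_gap (u v : TT) (h : u < v) : ∃ μ : ℝ, 0 < μ ∧ u + (μ : TT) ≤ v := by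
  induction v using WithBot.recBotCoe with
  | bot => exact absurd h not_lt_bot
  | coe v =>
    induction u using WithBot.recBotCoe with
    | bot => exact ⟨1, one_pos, by simp⟩
    | coe u =>
      have h' : u < v := by exact_mod_cast h
      refine ⟨v - u, by linarith, ?_⟩
      rw [← WithBot.coe_add]
      exact_mod_cast (by linarith : u + (v - u) ≤ v)

theorem aux_gapJ {k : ℕ} (f : Fin k → TT) (v : TT) (J : Finset (Fin k))
    (h : ∀ j ∈ J, f j < v) : ∃ μ : ℝ, 0 < μ ∧ ∀ j ∈ J, f j + (μ : TT) ≤ v := by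
  induction J using Finset.induction_on with
  | empty => exact ⟨1, one_pos, by simp⟩
  | insert a s ha ih =>
    obtain ⟨μ, hμ, h1⟩ := ih fun j hj => h j (Finset.mem_insert_of_mem hj)
    obtain ⟨ν, hν, h2⟩ := aux_gap _ _ (h a (Finset.mem_insert_self _ _))
    refine ⟨min μ ν, lt_min hμ hν, fun j hj => ?_⟩
    rcases Finset.mem_insert.1 hj with rfl | hj
    · refine le_trans ?_ h2
      gcongr
      exact_mod_cast min_le_right _ _
    · refine le_trans ?_ (h1 j hj)
      gcongr
      exact_mod_cast min_le_left _ _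

theorem aux_in {n : ℕ} (x : Fin (n + 1) → ℝ) (J : Finset (Fin (n + 1))) (l : ℝ)
    (a : Fin (n + 1) → TT) (j) (hj : j ∈ J) :
    a j + toT (x + l • eJ J) j = a j + (x j : TT) + (l : TT) := by
  simp [toT, eJ, hj, add_assoc]

theorem aux_out {n : ℕ} (x : Fin (n + 1) → ℝ) (J : Finset (Fin (n + 1))) (l : ℝ)
    (a : Fin (n + 1) → TT) (j) (hj : j ∉ J) :
    a j + toT (x + l • eJ J) j = a j + (x j : TT) := by
  simp [toT, eJ, hj]

theorem aux_le {n : ℕ} (a x : Fin n → TT) (j) : a j + x j ≤ tdot a x :=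
  Finset.le_sup (f := fun j => a j + x j) (Finset.mem_univ j)

theorem aux_self (u : TT) (l : ℝ) (hl : 0 ≤ l) : u ≤ u + (l : TT) := by
  have : (0 : TT) ≤ (l : TT) := by exact_mod_cast hl
  simpa using add_le_add_right this u

theorem aux_lower {n : ℕ} (x : Fin (n + 1) → ℝ) (J : Finset (Fin (n + 1))) (l : ℝ)
    (hl : 0 ≤ l) (a : Fin (n + 1) → TT) :
    tdot a (toT x) ≤ tdot a (toT (x + l • eJ J)) := by
  refine Finset.sup_le fun j _ => le_trans ?_ (aux_le _ _ j)
  by_cases hj : j ∈ J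
  · rw [aux_in _ _ _ _ _ hj]; exact aux_self _ _ hl
  · rw [aux_out _ _ _ _ _ hj]; exact le_rfl

theorem aux_upper {n : ℕ} (x : Fin (n + 1) → ℝ) (J : Finset (Fin (n + 1))) (l : ℝ)
    (hl : 0 ≤ l) (a : Fin (n + 1) → TT) :
    tdot a (toT (x + l • eJ J)) ≤ tdot a (toT x) + (l : TT) := by
  refine Finset.sup_le fun j _ => ?_
  have := aux_le a (toT x) j
  by_cases hj : j ∈ J
  · rw [aux_in _ _ _ _ _ hj]; exact add_le_add_left this _
  · rw [aux_out _ _ _ _ _ hj]; exact this.trans (aux_self _ _ hl)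

theorem aux_A {n : ℕ} (x : Fin (n + 1) → ℝ) (J : Finset (Fin (n + 1)))
    (a : Fin (n + 1) → TT) (h : ∃ j ∈ J, a j + (x j : TT) = tdot a (toT x))
    (l : ℝ) (hl : 0 ≤ l) :
    tdot a (toT (x + l • eJ J)) = tdot a (toT x) + (l : TT) := by
  refine le_antisymm (aux_upper x J l hl a) ?_
  obtain ⟨j, hj, e⟩ := h
  rw [← e, ← aux_in _ _ _ _ _ hj]
  exact aux_le _ _ j

theorem aux_B {n : ℕ} (x : Fin (n + 1) → ℝ) (J : Finset (Fin (n + 1)))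
    (a : Fin (n + 1) → TT) (h : ∀ j ∈ J, a j + (x j : TT) ≠ tdot a (toT x)) :
    ∃ μ : ℝ, 0 < μ ∧ ∀ l : ℝ, 0 ≤ l → l ≤ μ →
      tdot a (toT (x + l • eJ J)) = tdot a (toT x) := by
  obtain ⟨μ, hμ, h1⟩ := aux_gapJ (fun j => a j + (x j : TT)) (tdot a (toT x)) J
    fun j hj => lt_of_le_of_ne (aux_le a (toT x) j) (h j hj)
  refine ⟨μ, hμ, fun l hl hlμ => le_antisymm (Finset.sup_le fun j _ => ?_)
    (aux_lower x J l hl a)⟩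
  by_cases hj : j ∈ J
  · rw [aux_in _ _ _ _ _ hj]
    refine le_trans ?_ (h1 j hj)
    gcongr
    exact_mod_cast hlμ
  · rw [aux_out _ _ _ _ _ hj]; exact aux_le a (toT x) j

theorem aux_nle (c : TT) (hc : c ≠ ⊥) (l : ℝ) (hl : 0 < l) : ¬ c + (l : TT) ≤ c := by
  induction c using WithBot.recBotCoe with
  | bot => exact absurd rfl hc
  | coe c =>
    rw [← WithBot.coe_add, WithBot.coe_le_coe]
    linarith

/-- Feasibility of a direction `e^J` (with `∅ ⊊ J ⊊ [n+1]`)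
from a finite point `x`: (i) in the open half-space every direction is
feasible; (ii) on the s-hyperplane, feasibility in `Hᵢ^≥` holds iff
`argmax(Wᵢ⁺⊙x) ∩ J ≠ ∅` or `argmax(Wᵢ⁻⊙x) ∩ J = ∅`; (iii) feasibility in `Hᵢ`
holds iff the two intersections are both empty or both nonempty. -/
theorem stmt10 {m n : ℕ} (Wp Wn : Fin m → Fin (n + 1) → TT)
    (hsign : ∀ i j, min (Wp i j) (Wn i j) = ⊥)
    (hrow : ∀ i, ∃ j, max (Wp i j) (Wn i j) ≠ ⊥)
    (i : Fin m) (x : Fin (n + 1) → ℝ) (J : Finset (Fin (n + 1)))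
    (hJne : J ≠ ∅) (hJuniv : J ≠ Finset.univ) :
    (tdot (Wn i) (toT x) < tdot (Wp i) (toT x) →
      Feasible (halfHS Wp Wn i) x J) ∧
    (tdot (Wp i) (toT x) = tdot (Wn i) (toT x) →
      (Feasible (halfHS Wp Wn i) x J ↔
        ((∃ j ∈ J, j ∈ argmaxP Wp i x) ∨ ∀ j ∈ J, j ∉ argmaxM Wn i x))) ∧
    (tdot (Wp i) (toT x) = tdot (Wn i) (toT x) →
      (Feasible (hypHS Wp Wn i) x J ↔
        (((∀ j ∈ J, j ∉ argmaxP Wp i x) ∧ ∀ j ∈ J, j ∉ argmaxM Wn i x) ∨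
         ((∃ j ∈ J, j ∈ argmaxP Wp i x) ∧ ∃ j ∈ J, j ∈ argmaxM Wn i x)))) := by
  have hbot : tdot (Wp i) (toT x) = tdot (Wn i) (toT x) → tdot (Wp i) (toT x) ≠ ⊥ := by
    intro e hb
    obtain ⟨j, hj⟩ := hrow i
    have h1 := aux_le (Wp i) (toT x) j
    have h2 := aux_le (Wn i) (toT x) j
    rw [← e, hb] at h2
    rw [hb] at h1
    apply hj
    have h1' : Wp i j = ⊥ := by simpa [toT, WithBot.add_eq_bot] using h1
    have h2' : Wn i j = ⊥ := by simpa [toT, WithBot.add_eq_bot] using h2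
    simp [h1', h2']
  refine ⟨fun h => ?_, fun e => ?_, fun e => ?_⟩
  · obtain ⟨μ, hμ, h1⟩ := aux_gap _ _ h
    refine ⟨hJne, hJuniv, μ, hμ, fun l hl hlμ => ?_⟩
    refine (aux_upper x J l hl (Wn i)).trans (le_trans ?_ (aux_lower x J l hl (Wp i)))
    refine le_trans ?_ h1
    gcongr
    exact_mod_cast hlμ
  · constructor
    · rintro ⟨-, -, μ, hμ, h⟩
      by_contra! hc
      obtain ⟨hP, hN⟩ := hc
      obtain ⟨ν, hν, h1⟩ := aux_B x J (Wp i) hP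
      have hm := lt_min hμ hν
      have h2 : tdot (Wn i) _ ≤ tdot (Wp i) _ := h _ hm.le (min_le_left _ _)
      rw [h1 _ hm.le (min_le_right _ _), aux_A x J (Wn i) hN _ hm.le, ← e] at h2
      exact aux_nle _ (hbot e) _ hm h2
    · rintro (hP | hN)
      · refine ⟨hJne, hJuniv, 1, one_pos, fun l hl _ => ?_⟩
        change tdot (Wn i) _ ≤ tdot (Wp i) _
        rw [aux_A x J (Wp i) hP l hl, e]
        exact aux_upper x J l hl _
      · obtain ⟨ν, hν, h1⟩ := aux_B x J (Wn i) hN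
        refine ⟨hJne, hJuniv, ν, hν, fun l hl hlν => ?_⟩
        change tdot (Wn i) _ ≤ tdot (Wp i) _
        rw [h1 l hl hlν, ← e]
        exact aux_lower x J l hl _
  · by_cases hP : ∃ j ∈ J, j ∈ argmaxP Wp i x <;> by_cases hN : ∃ j ∈ J, j ∈ argmaxM Wn i x
    · refine iff_of_true ?_ (Or.inr ⟨hP, hN⟩)
      refine ⟨hJne, hJuniv, 1, one_pos, fun l hl _ => ?_⟩
      change tdot (Wp i) _ = tdot (Wn i) _
      rw [aux_A x J (Wp i) hP l hl, aux_A x J (Wn i) hN l hl, e]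
    · refine iff_of_false ?_ (by rintro (h | h) <;> grind)
      push Not at hN
      rintro ⟨-, -, μ, hμ, h⟩
      obtain ⟨ν, hν, h1⟩ := aux_B x J (Wn i) hN
      have hm := lt_min hμ hν
      have h2 : tdot (Wp i) _ = tdot (Wn i) _ := h _ hm.le (min_le_left _ _)
      rw [h1 _ hm.le (min_le_right _ _), aux_A x J (Wp i) hP _ hm.le, ← e] at h2
      exact aux_nle _ (hbot e) _ hm h2.le
    · refine iff_of_false ?_ (by rintro (h | h) <;> grind)
      push Not at hP
      rintro ⟨-, -, μ, hμ, h⟩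
      obtain ⟨ν, hν, h1⟩ := aux_B x J (Wp i) hP
      have hm := lt_min hμ hν
      have h2 : tdot (Wp i) _ = tdot (Wn i) _ := h _ hm.le (min_le_left _ _)
      rw [h1 _ hm.le (min_le_right _ _), aux_A x J (Wn i) hN _ hm.le, ← e] at h2
      exact aux_nle _ (hbot e) _ hm h2.ge
    · push Not at hP hN
      refine iff_of_true ?_ (Or.inl ⟨hP, hN⟩)
      obtain ⟨μ, hμ, h1⟩ := aux_B x J (Wp i) hP
      obtain ⟨ν, hν, h2⟩ := aux_B x J (Wn i) hN
      refine ⟨hJne, hJuniv, min μ ν, lt_min hμ hν, fun l hl hlm => ?_⟩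
      change tdot (Wp i) _ = tdot (Wn i) _
      rw [h1 l hl (hlm.trans (min_le_left _ _)), h2 l hl (hlm.trans (min_le_right _ _)), e]
end
end

section
/- Let x ∈ ℝ^{n+1} be a representative of a point of the tropical edge E_K. Then exactly one of the following three cases arises. (C1) x is the tropical basic point x^{K∪{ℓ}} for some ℓ ∈ [m]∖K; the tangent graph G_x is a tree spanning all coordinate nodes [n+1] and the hyperplane nodes K∪{ℓ}; in the tangent digraph D_x every hyperplane node has exactly one incoming and one outgoing arc; and, letting J be the set of coordinate nodes weakly connected to the unique element of argmax_j(W⁺_{ℓj}+x_j) in D_x with the node ℓ and its incident arcs deleted, e^J is the unique feasible direction from x in E_K. (C2) x lies in the relative interior of an ordinary segment of E_K; G_x is a forest with exactly two connected components whose hyperplane node set is K; every hyperplane node has exactly one incoming and one outgoing arc in D_x; and, letting J be the set of coordinate nodes of one of the two components, the feasible directions from x in E_K are exactly e^J and e^{[n+1]∖J}. (C3) x is a breakpoint of E_K; G_x is a tree spanning [n+1] and K; in D_x exactly one hyperplane node k has degree (2,1) or (1,2) and every other hyperplane node has degree (1,1); and, letting a and a' be the two arcs incident to k having the same orientation and letting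 J (resp. J') be the set of coordinate nodes weakly connected to k in D_x with a (resp. a') deleted, the feasible directions from x in E_K are exactly e^J and e^{J'}. -/
open scoped Classical

noncomputable section

/-- Case (C1) of the trichotomy: `x` is a tropical basic point of the edge. -/
def CaseBasic {m n : ℕ} (Wp Wn : Fin m → Fin (n + 1) → TT) (K : Finset (Fin m))
    (x : Fin (n + 1) → ℝ) : Prop :=
  ∃ ℓ : Fin m, ℓ ∉ K ∧ toT x ∈ edgeEK Wp Wn (insert ℓ K) ∧
    (∀ i, isHypNode Wp Wn x i ↔ i ∈ insert ℓ K) ∧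
    (tangentGraph Wp Wn x).IsAcyclic ∧
    (∀ u v, u ∈ suppV Wp Wn x → v ∈ suppV Wp Wn x →
      (tangentGraph Wp Wn x).Reachable u v) ∧
    (∀ i, isHypNode Wp Wn x i → deg11 Wp Wn x i) ∧
    ∃ j₀ : Fin (n + 1), argmaxP Wp ℓ x = {j₀} ∧
      ∀ J' : Finset (Fin (n + 1)),
        Feasible (edgeEK Wp Wn K) x J' ↔
          J' = Finset.univ.filter fun j =>
            (delNode Wp Wn x ℓ).Reachable (Sum.inr j₀) (Sum.inr j)

/-- Case (C2) of the trichotomy: `x` lies in the relative interior of an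
ordinary segment. -/
def CaseInterior {m n : ℕ} (Wp Wn : Fin m → Fin (n + 1) → TT) (K : Finset (Fin m))
    (x : Fin (n + 1) → ℝ) : Prop :=
  InRelIntSeg Wp Wn K x ∧
  (∀ i, isHypNode Wp Wn x i ↔ i ∈ K) ∧
  (tangentGraph Wp Wn x).IsAcyclic ∧
  (∀ i, isHypNode Wp Wn x i → deg11 Wp Wn x i) ∧
  ∃ S : Set (TGV m n), S ⊆ suppV Wp Wn x ∧ S.Nonempty ∧
    (suppV Wp Wn x \ S).Nonempty ∧
    (∀ u v, u ∈ suppV Wp Wn x → v ∈ suppV Wp Wn x →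
      ((tangentGraph Wp Wn x).Reachable u v ↔ (u ∈ S ↔ v ∈ S))) ∧
    ∀ J' : Finset (Fin (n + 1)),
      Feasible (edgeEK Wp Wn K) x J' ↔
        (J' = Finset.univ.filter (fun j => Sum.inr j ∈ S) ∨
         J' = (Finset.univ.filter fun j => Sum.inr j ∈ S)ᶜ)

/-- Case (C3) of the trichotomy: `x` is a breakpoint. -/
def CaseBreak {m n : ℕ} (Wp Wn : Fin m → Fin (n + 1) → TT) (K : Finset (Fin m))
    (x : Fin (n + 1) → ℝ) : Prop :=
  IsBreakpoint Wp Wn K x ∧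
  (∀ i, isHypNode Wp Wn x i ↔ i ∈ K) ∧
  (tangentGraph Wp Wn x).IsAcyclic ∧
  (∀ u v, u ∈ suppV Wp Wn x → v ∈ suppV Wp Wn x →
    (tangentGraph Wp Wn x).Reachable u v) ∧
  ∃ k, k ∈ K ∧ (deg21 Wp Wn x k ∨ deg12 Wp Wn x k) ∧
    (∀ i, isHypNode Wp Wn x i → i ≠ k → deg11 Wp Wn x i) ∧
    ∃ j₁ j₂ : Fin (n + 1), j₁ ≠ j₂ ∧
      ((deg21 Wp Wn x k ∧ degIn Wp Wn x k = {j₁, j₂}) ∨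
       (deg12 Wp Wn x k ∧ degOut Wp Wn x k = {j₁, j₂})) ∧
      ∀ J'' : Finset (Fin (n + 1)),
        Feasible (edgeEK Wp Wn K) x J'' ↔
          (J'' = reachJ Wp Wn x k j₁ ∨ J'' = reachJ Wp Wn x k j₂)

section Aux

open Filter Topology

def RLE {n : ℕ} (a b : Fin (n + 1) → TT) (y : Fin (n + 1) → ℝ) : Prop :=
  ∀ (j : Fin (n + 1)) (r : ℝ), a j = (r : TT) → ∃ (l : Fin (n + 1)) (s : ℝ), b l = (s : TT) ∧ r + y j ≤ s + y l

def Att {n : ℕ} (a : Fin (n + 1) → TT) (y : Fin (n + 1) → ℝ) (j : Fin (n + 1)) : Prop :=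
  ∃ r : ℝ, a j = (r : TT) ∧ ∀ (l : Fin (n + 1)) (s : ℝ), a l = (s : TT) → s + y l ≤ r + y j

lemma bot_or_coe (t : TT) : t = ⊥ ∨ ∃ r : ℝ, t = (r : TT) := by
  induction t using WithBot.recBotCoe with
  | bot => exact Or.inl rfl
  | coe r => exact Or.inr ⟨r, rfl⟩

lemma le_tdot {n : ℕ} (a : Fin (n + 1) → TT) (y : Fin (n + 1) → ℝ) (j : Fin (n + 1)) :
    a j + (y j : TT) ≤ tdot a (toT y) :=
  Finset.le_sup (f := fun j => a j + toT y j) (Finset.mem_univ j)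

lemma exists_tdot {n : ℕ} (a : Fin (n + 1) → TT) (y : Fin (n + 1) → ℝ) :
    ∃ j, tdot a (toT y) = a j + (y j : TT) := by
  obtain ⟨j, _, hj⟩ := Finset.exists_mem_eq_sup Finset.univ Finset.univ_nonempty
    (fun j => a j + toT y j)
  exact ⟨j, hj⟩

lemma tdot_le_iff {n : ℕ} (a b : Fin (n + 1) → TT) (y : Fin (n + 1) → ℝ) :
    tdot a (toT y) ≤ tdot b (toT y) ↔ RLE a b y := by
  constructor
  · intro h j r hr
    obtain ⟨l, hl⟩ := exists_tdot b y
    have h1 := (le_tdot a y j).trans (h.trans_eq hl)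
    rw [hr] at h1
    rcases bot_or_coe (b l) with hb | ⟨s, hs⟩
    · rw [hb, WithBot.bot_add, ← WithBot.coe_add] at h1
      simp at h1
    · refine ⟨l, s, hs, ?_⟩
      rw [hs] at h1
      exact_mod_cast h1
  · intro h
    obtain ⟨j, hj⟩ := exists_tdot a y
    rw [hj]
    rcases bot_or_coe (a j) with hb | ⟨r, hr⟩
    · rw [hb, WithBot.bot_add]; exact bot_le
    · obtain ⟨l, s, hs, hle⟩ := h j r hr
      refine le_trans ?_ (le_tdot b y l)
      rw [hr, hs]
      exact_mod_cast hle

lemma att_iff {n : ℕ} (a : Fin (n + 1) → TT) (y : Fin (n + 1) → ℝ) (j : Fin (n + 1)) :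
    Att a y j ↔ a j ≠ ⊥ ∧ a j + (y j : TT) = tdot a (toT y) := by
  constructor
  · rintro ⟨r, hr, h⟩
    refine ⟨by simp [hr], le_antisymm (le_tdot a y j) ?_⟩
    obtain ⟨l, hl⟩ := exists_tdot a y
    rw [hl]
    rcases bot_or_coe (a l) with hb | ⟨s, hs⟩
    · rw [hb, WithBot.bot_add]; exact bot_le
    · rw [hr, hs]
      exact_mod_cast h l s hs
  · rintro ⟨h1, h2⟩
    rcases bot_or_coe (a j) with hb | ⟨r, hr⟩
    · exact absurd hb h1
    · refine ⟨r, hr, fun l s hs => ?_⟩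
      have := le_tdot a y l
      rw [← h2, hr, hs] at this
      exact_mod_cast this

lemma exists_att {n : ℕ} (a : Fin (n + 1) → TT) (y : Fin (n + 1) → ℝ) {j : Fin (n + 1)}
    (hj : a j ≠ ⊥) : ∃ l, Att a y l := by
  obtain ⟨l, hl⟩ := exists_tdot a y
  refine ⟨l, (att_iff a y l).2 ⟨fun hb => ?_, hl.symm⟩⟩
  have := le_tdot a y j
  rw [hl, hb, WithBot.bot_add] at this
  rcases bot_or_coe (a j) with hb | ⟨r, hr⟩
  · exact hj hb
  · rw [hr, ← WithBot.coe_add] at this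
    simp at this

lemma dir_nec {n : ℕ} {a b : Fin (n + 1) → TT} {x : Fin (n + 1) → ℝ} {J : Finset (Fin (n + 1))}
    (hba : RLE b a x) {lam : ℝ} (hl : 0 < lam) (h : RLE a b (x + lam • eJ J))
    {j : Fin (n + 1)} (hj : j ∈ J) (hatt : Att a x j) : ∃ l ∈ J, Att b x l := by
  obtain ⟨r, hr, hmax⟩ := hatt
  obtain ⟨l, s, hs, hle⟩ := h j r hr
  have key : ∀ l s, b l = ((s : ℝ) : TT) → s + x l ≤ r + x j := by
    intro l s hs
    obtain ⟨j', r', hr', hle'⟩ := hba l s hs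
    exact hle'.trans (hmax _ _ hr')
  have h1 := key l s hs
  simp only [Pi.add_apply, Pi.smul_apply, smul_eq_mul, eJ, hj, if_true] at hle
  by_cases hlJ : l ∈ J
  · simp only [hlJ, if_true] at hle
    exact ⟨l, hlJ, s, hs, fun l' s' hs' => by linarith [key l' s' hs']⟩
  · simp only [hlJ, if_false] at hle
    linarith

lemma eJ_nonneg {n : ℕ} (J : Finset (Fin (n + 1))) (j : Fin (n + 1)) : 0 ≤ eJ J j := by
  unfold eJ; split_ifs <;> norm_num

lemma eJ_le_one {n : ℕ} (J : Finset (Fin (n + 1))) (j : Fin (n + 1)) : eJ J j ≤ 1 := by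
  unfold eJ; split_ifs <;> norm_num

lemma dir_suf {n : ℕ} {a b : Fin (n + 1) → TT} {x : Fin (n + 1) → ℝ} {J : Finset (Fin (n + 1))}
    (hab : RLE a b x)
    (h : RLE b a x → ∀ j ∈ J, Att a x j → ∃ l ∈ J, Att b x l) :
    ∀ᶠ lam : ℝ in 𝓝 0, 0 ≤ lam → RLE a b (x + lam • eJ J) := by
  have : ∀ᶠ lam : ℝ in 𝓝 0, ∀ j : Fin (n + 1), 0 ≤ lam → ∀ r : ℝ, a j = (r : TT) →
      ∃ (l : Fin (n + 1)) (s : ℝ), b l = (s : TT) ∧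
        r + (x + lam • eJ J) j ≤ s + (x + lam • eJ J) l := by
    rw [Filter.eventually_all]
    intro j
    rcases bot_or_coe (a j) with hb | ⟨r, hr⟩
    · exact Filter.Eventually.of_forall fun lam _ r hr => by rw [hb] at hr; simp at hr
    obtain ⟨l0, s0, hs0, hle0⟩ := hab j r hr
    obtain ⟨l, s, hs, hmax⟩ := exists_att b x (j := l0) (by simp [hs0])
    have hle : r + x j ≤ s + x l := hle0.trans (hmax _ _ hs0)
    rcases hle.lt_or_eq with hlt | heq
    · have : ∀ᶠ lam : ℝ in 𝓝 0, lam < s + x l - (r + x j) :=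
        Iio_mem_nhds (by linarith)
      filter_upwards [this] with lam hlam h0 r' hr'
      have : r' = r := by rw [hr] at hr'; exact_mod_cast hr'.symm
      subst this
      refine ⟨l, s, hs, ?_⟩
      simp only [Pi.add_apply, Pi.smul_apply, smul_eq_mul]
      nlinarith [eJ_nonneg J l, eJ_le_one J j, mul_nonneg h0 (eJ_nonneg J l),
        mul_le_mul_of_nonneg_left (eJ_le_one J j) h0]
    · refine Filter.Eventually.of_forall fun lam h0 r' hr' => ?_
      have : r' = r := by rw [hr] at hr'; exact_mod_cast hr'.symm
      subst this
      by_cases hj : j ∈ J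
      · have hba : RLE b a x := fun l' s' hs' => ⟨j, r', hr, by linarith [hmax _ _ hs']⟩
        have hatt : Att a x j := ⟨r', hr, fun j' t ht => by
          obtain ⟨l', s', hs', h'⟩ := hab j' t ht
          linarith [hmax _ _ hs']⟩
        obtain ⟨l', hl', s', hs', hm'⟩ := h hba j hj hatt
        refine ⟨l', s', hs', ?_⟩
        simp only [Pi.add_apply, Pi.smul_apply, smul_eq_mul, eJ, hj, hl', if_true]
        linarith [hm' _ _ hs]
      · refine ⟨l, s, hs, ?_⟩
        have := mul_nonneg h0 (eJ_nonneg J l)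
        simp only [Pi.add_apply, Pi.smul_apply, smul_eq_mul]
        have h2 : eJ J j = 0 := by simp [eJ, hj]
        rw [h2]; linarith
  filter_upwards [this] with lam hlam h0 j
  exact hlam j h0

lemma RLE_convex {n : ℕ} {a b : Fin (n + 1) → TT} {x : Fin (n + 1) → ℝ} {J : Finset (Fin (n + 1))}
    {l1 l2 lam : ℝ} (h1 : RLE a b (x + l1 • eJ J)) (h2 : RLE a b (x + l2 • eJ J))
    (hl1 : l1 ≤ lam) (hl2 : lam ≤ l2) : RLE a b (x + lam • eJ J) := by
  intro j r hr
  by_cases hj : j ∈ J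
  · obtain ⟨l, s, hs, hle⟩ := h2 j r hr
    refine ⟨l, s, hs, ?_⟩
    simp only [Pi.add_apply, Pi.smul_apply, smul_eq_mul, eJ, hj, if_true] at hle ⊢
    split_ifs at hle ⊢ <;> linarith
  · obtain ⟨l, s, hs, hle⟩ := h1 j r hr
    refine ⟨l, s, hs, ?_⟩
    simp only [Pi.add_apply, Pi.smul_apply, smul_eq_mul, eJ, hj, if_false] at hle ⊢
    split_ifs at hle ⊢ <;> linarith

lemma RLE_closed {n : ℕ} (a b : Fin (n + 1) → TT) : IsClosed {y | RLE a b y} := by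
  have : {y | RLE a b y} = ⋂ (j : Fin (n + 1)), ⋂ (r : ℝ), ⋂ (_ : a j = (r : TT)),
      ⋃ (l : Fin (n + 1)), {y | ∃ s : ℝ, b l = (s : TT) ∧ r + y j ≤ s + y l} := by
    ext y
    simp [RLE]
  rw [this]
  refine isClosed_iInter fun j => isClosed_iInter fun r => isClosed_iInter fun _ =>
    isClosed_iUnion_of_finite fun l => ?_
  rcases bot_or_coe (b l) with hb | ⟨s, hs⟩
  · have : {y : Fin (n + 1) → ℝ | ∃ s : ℝ, b l = (s : TT) ∧ r + y j ≤ s + y l} = ∅ := by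
      ext y; simp [hb]
    rw [this]; exact isClosed_empty
  · have : {y : Fin (n + 1) → ℝ | ∃ s : ℝ, b l = (s : TT) ∧ r + y j ≤ s + y l} =
        {y | r + y j ≤ s + y l} := by
      ext y; simp [hs]
    rw [this]
    exact isClosed_le (by fun_prop) (by fun_prop)

lemma RLE_shift {n : ℕ} {a b : Fin (n + 1) → TT} {y : Fin (n + 1) → ℝ} (c : ℝ) (h : RLE a b y)
    {z : Fin (n + 1) → ℝ} (hz : ∀ j, z j = y j + c) : RLE a b z := by
  intro j r hr
  obtain ⟨l, s, hs, hle⟩ := h j r hr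
  exact ⟨l, s, hs, by rw [hz, hz]; linarith⟩

lemma RLE_unbdd {n : ℕ} {a b : Fin (n + 1) → TT} {x : Fin (n + 1) → ℝ} {J : Finset (Fin (n + 1))}
    (h : ∀ B : ℝ, ∃ lam, B < lam ∧ RLE a b (x + lam • eJ J)) :
    tdot a (fun j => if j ∈ J then (x j : TT) else ⊥) ≤
      tdot b (fun j => if j ∈ J then (x j : TT) else ⊥) := by
  refine Finset.sup_le fun j _ => ?_
  by_cases hj : j ∈ J
  swap
  · simp [hj]
  rcases bot_or_coe (a j) with hb | ⟨r, hr⟩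
  · simp [hb]
  obtain ⟨B, hB⟩ : ∃ B : ℝ, ∀ l, (b l).unbotD 0 + x l - r - x j ≤ B := by
    obtain ⟨B, hB⟩ := (Set.finite_range fun l => (b l).unbotD 0 + x l - r - x j).bddAbove
    exact ⟨B, fun l => hB ⟨l, rfl⟩⟩
  obtain ⟨lam, hlam, hR⟩ := h B
  obtain ⟨l, s, hs, hle⟩ := hR j r hr
  have h1 := hB l
  simp only [hs, WithBot.unbotD_coe] at h1
  simp only [Pi.add_apply, Pi.smul_apply, smul_eq_mul, eJ, hj, if_true] at hle
  by_cases hl : l ∈ J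
  · simp only [hl, if_true] at hle
    refine le_trans ?_ (Finset.le_sup (f := fun l => b l + (if l ∈ J then (x l : TT) else ⊥))
      (Finset.mem_univ l))
    simp only [hj, hl, if_true, hr, hs]
    have : r + x j ≤ s + x l := by linarith
    exact_mod_cast this
  · simp only [hl, if_false] at hle
    linarith

end Aux
section Aux2

open Filter Topology

variable {m n : ℕ} {Wp Wn : Fin m → Fin (n + 1) → TT} {K : Finset (Fin m)}

def RE (Wp Wn : Fin m → Fin (n + 1) → TT) (K : Finset (Fin m)) (y : Fin (n + 1) → ℝ) : Prop :=
  (∀ i ∈ K, RLE (Wp i) (Wn i) y) ∧ ∀ i, RLE (Wn i) (Wp i) y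

lemma mem_edge_iff (y : Fin (n + 1) → ℝ) : toT y ∈ edgeEK Wp Wn K ↔ RE Wp Wn K y := by
  unfold edgeEK RE hypHS coneC
  simp only [Set.mem_ofPred_eq, ← tdot_le_iff]
  constructor
  · rintro ⟨h1, h2⟩
    exact ⟨fun i hi => (h1 i hi).le, h2⟩
  · rintro ⟨h1, h2⟩
    exact ⟨fun i hi => le_antisymm (h1 i hi) (h2 i), h2⟩

lemma hyp_iff (hrow : ∀ i, ∃ j, max (Wp i j) (Wn i j) ≠ ⊥) (x : Fin (n + 1) → ℝ) (i : Fin m) :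
    isHypNode Wp Wn x i ↔ RLE (Wp i) (Wn i) x ∧ RLE (Wn i) (Wp i) x := by
  unfold isHypNode
  rw [← tdot_le_iff, ← tdot_le_iff, ← le_antisymm_iff]
  refine ⟨fun h => h.1, fun h => ⟨h, ?_⟩⟩
  obtain ⟨j, hj⟩ := hrow i
  rw [bot_lt_iff_ne_bot]
  intro hb
  have h1 := le_tdot (Wp i) x j
  have h2 := le_tdot (Wn i) x j
  rw [hb] at h1
  rw [← h, hb] at h2
  apply hj
  simp only [le_bot_iff, WithBot.add_eq_bot, WithBot.coe_ne_bot, or_false] at h1 h2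
  simp [h1, h2]

lemma tmod_bot_right {i : Fin m} {j : Fin (n + 1)} (h : Wn i j = ⊥) :
    tmod Wp Wn i j = Wp i j := by simp [tmod, h]

lemma tmod_bot_left {i : Fin m} {j : Fin (n + 1)} (h : Wp i j = ⊥) :
    tmod Wp Wn i j = Wn i j := by simp [tmod, h]

lemma sign_cases (hsign : ∀ i j, min (Wp i j) (Wn i j) = ⊥) (i : Fin m) (j : Fin (n + 1)) :
    Wp i j = ⊥ ∨ Wn i j = ⊥ := by
  have := hsign i j
  rcases le_total (Wp i j) (Wn i j) with h | h
  · left; rwa [min_eq_left h] at this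
  · right; rwa [min_eq_right h] at this

lemma tedge_iff (hsign : ∀ i j, min (Wp i j) (Wn i j) = ⊥)
    (x : Fin (n + 1) → ℝ) (i : Fin m) (j : Fin (n + 1)) (hh : isHypNode Wp Wn x i) :
    isTEdge Wp Wn x i j ↔ Att (Wp i) x j ∨ Att (Wn i) x j := by
  have hr : RLE (Wp i) (Wn i) x ∧ RLE (Wn i) (Wp i) x := by
    rw [← tdot_le_iff, ← tdot_le_iff, ← le_antisymm_iff]; exact hh.1
  have hmod : tdot (tmod Wp Wn i) (toT x) = tdot (Wp i) (toT x) := by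
    apply le_antisymm
    · obtain ⟨l, hl⟩ := exists_tdot (tmod Wp Wn i) x
      rw [hl]
      rcases sign_cases hsign i l with h | h
      · rw [tmod_bot_left h, hh.1]; exact le_tdot _ _ _
      · rw [tmod_bot_right h]; exact le_tdot _ _ _
    · refine Finset.sup_le fun l _ => le_trans ?_ (le_tdot _ x l)
      exact add_le_add_left (le_max_left _ _) _
  have hne : tdot (Wp i) (toT x) ≠ ⊥ := hh.2.ne'
  unfold isTEdge
  rw [hmod, att_iff, att_iff, ← hh.1]
  rcases sign_cases hsign i j with h | h
  · rw [tmod_bot_left h]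
    simp only [h, ne_eq, not_true_eq_false, false_and, false_or]
    refine ⟨fun hx => ⟨fun hb => ?_, hx.2⟩, fun hx => ⟨hh, hx.2⟩⟩
    rw [hb, WithBot.bot_add] at hx
    exact hne hx.2.symm
  · rw [tmod_bot_right h]
    simp only [h, ne_eq, not_true_eq_false, false_and, or_false]
    refine ⟨fun hx => ⟨fun hb => ?_, hx.2⟩, fun hx => ⟨hh, hx.2⟩⟩
    rw [hb, WithBot.bot_add] at hx
    exact hne hx.2.symm

lemma att_ne {a : Fin (n + 1) → TT} {x : Fin (n + 1) → ℝ} {j} (h : Att a x j) : a j ≠ ⊥ :=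
  ((att_iff a x j).1 h).1

lemma degIn_iff (hsign : ∀ i j, min (Wp i j) (Wn i j) = ⊥)
    (x : Fin (n + 1) → ℝ) (i : Fin m) (j : Fin (n + 1)) :
    j ∈ degIn Wp Wn x i ↔ isHypNode Wp Wn x i ∧ Att (Wp i) x j := by
  change (isTEdge Wp Wn x i j ∧ Wp i j ≠ ⊥) ↔ _
  constructor
  · rintro ⟨h1, h2⟩
    refine ⟨h1.1, ((tedge_iff hsign x i j h1.1).1 h1).resolve_right fun h => ?_⟩
    exact (sign_cases hsign i j).elim h2 (att_ne h)
  · rintro ⟨h1, h2⟩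
    exact ⟨(tedge_iff hsign x i j h1).2 (Or.inl h2), att_ne h2⟩

lemma degOut_iff (hsign : ∀ i j, min (Wp i j) (Wn i j) = ⊥)
    (x : Fin (n + 1) → ℝ) (i : Fin m) (j : Fin (n + 1)) :
    j ∈ degOut Wp Wn x i ↔ isHypNode Wp Wn x i ∧ Att (Wn i) x j := by
  change (isTEdge Wp Wn x i j ∧ Wn i j ≠ ⊥) ↔ _
  constructor
  · rintro ⟨h1, h2⟩
    refine ⟨h1.1, ((tedge_iff hsign x i j h1.1).1 h1).resolve_left fun h => ?_⟩
    exact (sign_cases hsign i j).elim (att_ne h) h2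
  · rintro ⟨h1, h2⟩
    exact ⟨(tedge_iff hsign x i j h1).2 (Or.inr h2), att_ne h2⟩

lemma tedge_iff_deg (hsign : ∀ i j, min (Wp i j) (Wn i j) = ⊥)
    (x : Fin (n + 1) → ℝ) (i : Fin m) (j : Fin (n + 1)) :
    isTEdge Wp Wn x i j ↔ j ∈ degIn Wp Wn x i ∨ j ∈ degOut Wp Wn x i := by
  rw [degIn_iff hsign, degOut_iff hsign, ← and_or_left]
  refine ⟨fun h => ⟨h.1, (tedge_iff hsign x i j h.1).1 h⟩, fun h => (tedge_iff hsign x i j h.1).2 h.2⟩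

lemma deg_disj (hsign : ∀ i j, min (Wp i j) (Wn i j) = ⊥)
    (x : Fin (n + 1) → ℝ) (i : Fin m) : Disjoint (degIn Wp Wn x i) (degOut Wp Wn x i) := by
  rw [Set.disjoint_left]
  rintro j h1 h2
  exact (sign_cases hsign i j).elim h1.2 h2.2

lemma degIn_nonempty (hsign : ∀ i j, min (Wp i j) (Wn i j) = ⊥)
    (x : Fin (n + 1) → ℝ) (i : Fin m) (h : isHypNode Wp Wn x i) :
    (degIn Wp Wn x i).Nonempty := by
  obtain ⟨l, hl⟩ := exists_tdot (Wp i) x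
  refine ⟨l, (degIn_iff hsign x i l).2 ⟨h, (att_iff _ _ _).2 ⟨fun hb => ?_, hl.symm⟩⟩⟩
  rw [hb, WithBot.bot_add] at hl
  exact h.2.ne' hl

lemma degOut_nonempty (hsign : ∀ i j, min (Wp i j) (Wn i j) = ⊥)
    (x : Fin (n + 1) → ℝ) (i : Fin m) (h : isHypNode Wp Wn x i) :
    (degOut Wp Wn x i).Nonempty := by
  obtain ⟨l, hl⟩ := exists_tdot (Wn i) x
  refine ⟨l, (degOut_iff hsign x i l).2 ⟨h, (att_iff _ _ _).2 ⟨fun hb => ?_, hl.symm⟩⟩⟩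
  rw [hb, WithBot.bot_add] at hl
  exact h.2.ne' (h.1.trans hl)

lemma argmaxP_eq (hsign : ∀ i j, min (Wp i j) (Wn i j) = ⊥)
    (x : Fin (n + 1) → ℝ) (i : Fin m) (h : isHypNode Wp Wn x i) :
    argmaxP Wp i x = degIn Wp Wn x i := by
  ext j
  rw [degIn_iff hsign, att_iff]
  unfold argmaxP
  simp only [Set.mem_ofPred_eq]
  refine ⟨fun hj => ⟨h, fun hb => ?_, hj⟩, fun hj => hj.2.2⟩
  rw [hb, WithBot.bot_add] at hj
  exact h.2.ne' hj.symm

lemma feasible_iff (hsign : ∀ i j, min (Wp i j) (Wn i j) = ⊥)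
    (hrow : ∀ i, ∃ j, max (Wp i j) (Wn i j) ≠ ⊥)
    {x : Fin (n + 1) → ℝ} (hx : toT x ∈ edgeEK Wp Wn K) (J : Finset (Fin (n + 1))) :
    Feasible (edgeEK Wp Wn K) x J ↔ J ≠ ∅ ∧ J ≠ Finset.univ ∧
      (∀ i ∈ K, (∃ j ∈ J, j ∈ degIn Wp Wn x i) → ∃ j ∈ J, j ∈ degOut Wp Wn x i) ∧
      (∀ i, (∃ j ∈ J, j ∈ degOut Wp Wn x i) → ∃ j ∈ J, j ∈ degIn Wp Wn x i) := by
  rw [mem_edge_iff] at hx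
  unfold Feasible
  refine and_congr_right fun _ => and_congr_right fun _ => ?_
  simp only [mem_edge_iff, degIn_iff hsign, degOut_iff hsign, hyp_iff hrow]
  constructor
  · rintro ⟨μ, hμ, h⟩
    have hh := h μ hμ.le le_rfl
    constructor
    · rintro i hi ⟨j, hj, ⟨h1, h2⟩, h3⟩
      obtain ⟨l, hl, hl'⟩ := dir_nec h2 hμ (hh.1 i hi) hj h3
      exact ⟨l, hl, ⟨h1, h2⟩, hl'⟩
    · rintro i ⟨j, hj, ⟨h1, h2⟩, h3⟩
      obtain ⟨l, hl, hl'⟩ := dir_nec h1 hμ (hh.2 i) hj h3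
      exact ⟨l, hl, ⟨h1, h2⟩, hl'⟩
  · rintro ⟨h1, h2⟩
    have e1 : ∀ᶠ lam : ℝ in 𝓝 0, ∀ i, i ∈ K → 0 ≤ lam → RLE (Wp i) (Wn i) (x + lam • eJ J) := by
      rw [Filter.eventually_all]
      intro i
      by_cases hi : i ∈ K
      · have := dir_suf (J := J) (hx.1 i hi) (fun hb j hj ha => by
          obtain ⟨l, hl, hl'⟩ := h1 i hi ⟨j, hj, ⟨hx.1 i hi, hb⟩, ha⟩
          exact ⟨l, hl, hl'.2⟩)
        filter_upwards [this] with lam hl _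
        exact hl
      · exact Filter.Eventually.of_forall fun _ h => absurd h hi
    have e2 : ∀ᶠ lam : ℝ in 𝓝 0, ∀ i, 0 ≤ lam → RLE (Wn i) (Wp i) (x + lam • eJ J) := by
      rw [Filter.eventually_all]
      intro i
      exact dir_suf (J := J) (hx.2 i) (fun hb j hj ha => by
          obtain ⟨l, hl, hl'⟩ := h2 i ⟨j, hj, ⟨hb, hx.2 i⟩, ha⟩
          exact ⟨l, hl, hl'.2⟩)
    obtain ⟨ε, hε, hb⟩ := Metric.eventually_nhds_iff.1 (e1.and e2)
    refine ⟨ε / 2, by positivity, fun lam h0 hle => ?_⟩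
    have := hb (y := lam) (by rw [Real.dist_eq, sub_zero, abs_of_nonneg h0]; linarith)
    exact ⟨fun i hi => this.1 i hi h0, fun i => this.2 i h0⟩

lemma RE_convex {x : Fin (n + 1) → ℝ} {J : Finset (Fin (n + 1))}
    {l1 l2 lam : ℝ} (h1 : RE Wp Wn K (x + l1 • eJ J)) (h2 : RE Wp Wn K (x + l2 • eJ J))
    (hl1 : l1 ≤ lam) (hl2 : lam ≤ l2) : RE Wp Wn K (x + lam • eJ J) :=
  ⟨fun i hi => RLE_convex (h1.1 i hi) (h2.1 i hi) hl1 hl2,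
    fun i => RLE_convex (h1.2 i) (h2.2 i) hl1 hl2⟩

lemma RE_closed : IsClosed {y | RE Wp Wn K y} := by
  have : {y | RE Wp Wn K y} = (⋂ i, ⋂ (_ : i ∈ K), {y | RLE (Wp i) (Wn i) y}) ∩
      ⋂ i, {y | RLE (Wn i) (Wp i) y} := by
    ext y; simp [RE]
  rw [this]
  exact (isClosed_iInter fun i => isClosed_iInter fun _ => RLE_closed _ _).inter
    (isClosed_iInter fun i => RLE_closed _ _)

lemma RE_compl {x : Fin (n + 1) → ℝ} {J : Finset (Fin (n + 1))} {lam : ℝ} :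
    RE Wp Wn K (x + lam • eJ Jᶜ) ↔ RE Wp Wn K (x + (-lam) • eJ J) := by
  have key : ∀ j, (x + lam • eJ Jᶜ) j = (x + (-lam) • eJ J) j + lam := by
    intro j
    simp only [Pi.add_apply, Pi.smul_apply, smul_eq_mul, eJ, Finset.mem_compl]
    by_cases hj : j ∈ J <;> simp [hj]
  have key2 : ∀ j, (x + (-lam) • eJ J) j = (x + lam • eJ Jᶜ) j + (-lam) := by
    intro j; rw [key]; ring
  exact ⟨fun h => ⟨fun i hi => RLE_shift _ (h.1 i hi) key2, fun i => RLE_shift _ (h.2 i) key2⟩,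
    fun h => ⟨fun i hi => RLE_shift _ (h.1 i hi) key, fun i => RLE_shift _ (h.2 i) key⟩⟩

lemma RE_bdd (hfin : ∀ x ∈ coneC Wp Wn, x ≠ (fun _ => (⊥ : TT)) → ∀ j, x j ≠ ⊥)
    (x : Fin (n + 1) → ℝ) {J : Finset (Fin (n + 1))} (h0 : J ≠ ∅) (h1 : J ≠ Finset.univ) :
    ∃ B : ℝ, ∀ lam, RE Wp Wn K (x + lam • eJ J) → lam ≤ B := by
  by_contra! hcon
  obtain ⟨j0, hj0⟩ := Finset.nonempty_iff_ne_empty.2 h0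
  obtain ⟨j1, hj1⟩ : ∃ j, j ∉ J := by
    by_contra! h
    exact h1 (Finset.eq_univ_iff_forall.2 h)
  refine hfin (fun j => if j ∈ J then (x j : TT) else ⊥) (fun i => RLE_unbdd fun B => ?_) ?_ j1
    (by simp [hj1])
  · obtain ⟨lam, h, hB⟩ := hcon B
    exact ⟨lam, hB, h.2 i⟩
  · intro h
    have := congrFun h j0
    simp [hj0] at this

/-- the set of parameters is a compact interval -/
lemma exists_Icc (hfin : ∀ x ∈ coneC Wp Wn, x ≠ (fun _ => (⊥ : TT)) → ∀ j, x j ≠ ⊥)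
    {x : Fin (n + 1) → ℝ} (hx : toT x ∈ edgeEK Wp Wn K)
    {J : Finset (Fin (n + 1))} (h0 : J ≠ ∅) (h1 : J ≠ Finset.univ) :
    ∃ L U : ℝ, L ≤ 0 ∧ 0 ≤ U ∧
      ∀ lam : ℝ, toT (x + lam • eJ J) ∈ edgeEK Wp Wn K ↔ L ≤ lam ∧ lam ≤ U := by
  simp only [mem_edge_iff] at hx ⊢
  set S : Set ℝ := {lam | RE Wp Wn K (x + lam • eJ J)} with hS
  have hS0 : (0 : ℝ) ∈ S := by simpa [hS] using hx
  obtain ⟨B, hB⟩ := RE_bdd (K := K) hfin x h0 h1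
  obtain ⟨B', hB'⟩ := RE_bdd (K := K) hfin x (J := Jᶜ)
    (by rwa [ne_eq, Finset.compl_eq_empty_iff]) (by rwa [ne_eq, Finset.compl_eq_univ_iff])
  have hcl : IsClosed S := RE_closed.preimage (f := fun lam : ℝ => x + lam • eJ J) (by fun_prop)
  have ha : BddAbove S := ⟨B, fun l hl => hB l hl⟩
  have hb : BddBelow S := ⟨-B', fun l hl => by
    have := hB' (-l) (RE_compl.2 (by rw [neg_neg]; exact hl))
    linarith⟩
  have hne : S.Nonempty := ⟨0, hS0⟩
  have hL := hcl.csInf_mem hne hb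
  have hU := hcl.csSup_mem hne ha
  refine ⟨sInf S, sSup S, csInf_le hb hS0, le_csSup ha hS0, fun lam => ⟨fun h => ?_, fun h => ?_⟩⟩
  · exact ⟨csInf_le hb h, le_csSup ha h⟩
  · exact RE_convex hL hU h.1 h.2

lemma feas_pos {x : Fin (n + 1) → ℝ} {J : Finset (Fin (n + 1))} {L U : ℝ}
    (h : ∀ lam : ℝ, toT (x + lam • eJ J) ∈ edgeEK Wp Wn K ↔ L ≤ lam ∧ lam ≤ U)
    (hf : Feasible (edgeEK Wp Wn K) x J) : 0 < U := by
  obtain ⟨_, _, μ, hμ, hh⟩ := hf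
  exact hμ.trans_le ((h μ).1 (hh μ hμ.le le_rfl)).2

lemma feas_neg {x : Fin (n + 1) → ℝ} {J : Finset (Fin (n + 1))} {L U : ℝ}
    (h : ∀ lam : ℝ, toT (x + lam • eJ J) ∈ edgeEK Wp Wn K ↔ L ≤ lam ∧ lam ≤ U)
    (hf : Feasible (edgeEK Wp Wn K) x Jᶜ) : L < 0 := by
  obtain ⟨_, _, μ, hμ, hh⟩ := hf
  have := hh μ hμ.le le_rfl
  rw [mem_edge_iff, RE_compl, ← mem_edge_iff, h] at this
  linarith

lemma nfeas_pos {x : Fin (n + 1) → ℝ} {J : Finset (Fin (n + 1))} {L U : ℝ}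
    (h0 : J ≠ ∅) (h1 : J ≠ Finset.univ) (hL : L ≤ 0) (hU : 0 ≤ U)
    (h : ∀ lam : ℝ, toT (x + lam • eJ J) ∈ edgeEK Wp Wn K ↔ L ≤ lam ∧ lam ≤ U)
    (hf : ¬ Feasible (edgeEK Wp Wn K) x J) : U = 0 := by
  by_contra hne
  refine hf ⟨h0, h1, U, lt_of_le_of_ne hU (Ne.symm hne), fun lam hl hl' => (h lam).2 ⟨by linarith, hl'⟩⟩

lemma nfeas_neg {x : Fin (n + 1) → ℝ} {J : Finset (Fin (n + 1))} {L U : ℝ}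
    (h0 : J ≠ ∅) (h1 : J ≠ Finset.univ) (hL : L ≤ 0) (hU : 0 ≤ U)
    (h : ∀ lam : ℝ, toT (x + lam • eJ J) ∈ edgeEK Wp Wn K ↔ L ≤ lam ∧ lam ≤ U)
    (hf : ¬ Feasible (edgeEK Wp Wn K) x Jᶜ) : L = 0 := by
  by_contra hne
  have : L < 0 := lt_of_le_of_ne hL hne
  refine hf ⟨by rwa [ne_eq, Finset.compl_eq_empty_iff], by rwa [ne_eq, Finset.compl_eq_univ_iff],
    -L, by linarith, fun lam hl hl' => ?_⟩
  rw [mem_edge_iff, RE_compl, ← mem_edge_iff, h]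
  constructor <;> linarith

lemma ordSeg_of {x : Fin (n + 1) → ℝ} {J : Finset (Fin (n + 1))} {L U : ℝ}
    (h0 : J ≠ ∅) (h1 : J ≠ Finset.univ) (hLU : L < U)
    (h : ∀ lam : ℝ, toT (x + lam • eJ J) ∈ edgeEK Wp Wn K ↔ L ≤ lam ∧ lam ≤ U) :
    IsOrdSeg Wp Wn K (x + L • eJ J) J (U - L) := by
  refine ⟨by linarith, h0, h1, fun lam hl hl' => ?_, fun ε hε => ?_, fun ε hε => ?_⟩
  · rw [add_assoc, ← add_smul, h]
    constructor <;> linarith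
  · rw [add_sub_assoc, ← sub_smul, h]
    intro h; linarith
  · rw [add_assoc, ← add_smul, h]
    intro h; linarith

lemma interior_of (hfin : ∀ x ∈ coneC Wp Wn, x ≠ (fun _ => (⊥ : TT)) → ∀ j, x j ≠ ⊥)
    {x : Fin (n + 1) → ℝ} (hx : toT x ∈ edgeEK Wp Wn K) {J : Finset (Fin (n + 1))}
    (h1 : Feasible (edgeEK Wp Wn K) x J) (h2 : Feasible (edgeEK Wp Wn K) x Jᶜ) :
    InRelIntSeg Wp Wn K x := by
  obtain ⟨L, U, hL, hU, h⟩ := exists_Icc hfin hx h1.1 h1.2.1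
  have a := feas_pos h h1
  have b := feas_neg h h2
  refine ⟨x + L • eJ J, J, U - L, ordSeg_of h1.1 h1.2.1 (by linarith) h, -L, by linarith,
    by linarith, ?_⟩
  rw [add_assoc, ← add_smul]; simp

lemma break_of (hfin : ∀ x ∈ coneC Wp Wn, x ≠ (fun _ => (⊥ : TT)) → ∀ j, x j ≠ ⊥)
    {x : Fin (n + 1) → ℝ} (hx : toT x ∈ edgeEK Wp Wn K) {J J' : Finset (Fin (n + 1))}
    (h1 : ¬ Feasible (edgeEK Wp Wn K) x J) (h2 : Feasible (edgeEK Wp Wn K) x Jᶜ)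
    (h3 : Feasible (edgeEK Wp Wn K) x J') (h4 : ¬ Feasible (edgeEK Wp Wn K) x J'ᶜ)
    (hJ : J ⊂ J') :
    IsBreakpoint Wp Wn K x := by
  have hJ0 : J ≠ ∅ := by have := h2.2.1; rwa [ne_eq, Finset.compl_eq_univ_iff] at this
  have hJ1 : J ≠ Finset.univ := by have := h2.1; rwa [ne_eq, Finset.compl_eq_empty_iff] at this
  obtain ⟨L, U, hL, hU, h⟩ := exists_Icc hfin hx hJ0 hJ1
  obtain ⟨L', U', hL', hU', h'⟩ := exists_Icc hfin hx h3.1 h3.2.1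
  have a := feas_neg h h2
  have b := nfeas_pos hJ0 hJ1 hL hU h h1
  have c := feas_pos h' h3
  have d := nfeas_neg h3.1 h3.2.1 hL' hU' h' h4
  subst b d
  refine ⟨x + L • eJ J, J, 0 - L, ordSeg_of hJ0 hJ1 a h, ?_, J', U' - 0, ?_, hJ⟩
  · rw [add_assoc, ← add_smul]; simp
  · have := ordSeg_of h3.1 h3.2.1 c h'
    simpa using this

end Aux2
section Aux3

variable {m n : ℕ} {Wp Wn : Fin m → Fin (n + 1) → TT} {K : Finset (Fin m)}

lemma tper_tight {q : ℕ} {M : Fin q → Fin q → TT} {X : Fin q → ℝ} {D : Fin q → TT}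
    (hD : ∀ i, D i ≠ ⊥) (hle : ∀ i j, M i j + (X j : TT) ≤ D i) (σ : Equiv.Perm (Fin q))
    (hσ : ∀ i, M i (σ i) + (X (σ i) : TT) = D i) :
    (∑ i, M i (σ i)) = tper M ∧ tper M ≠ ⊥ := by
  have hne : (∑ i, M i (σ i)) ≠ ⊥ := by
    rw [ne_eq, WithBot.sum_eq_bot_iff]
    rintro ⟨i, _, hi⟩
    have := hσ i
    rw [hi, WithBot.bot_add] at this
    exact hD i this.symm
  have heq : (∑ i, M i (σ i)) = tper M := by
    refine le_antisymm (Finset.le_sup (f := fun σ : Equiv.Perm (Fin q) => ∑ i, M i (σ i))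
      (Finset.mem_univ σ)) (Finset.sup_le fun τ _ => ?_)
    have hX : ∀ τ : Equiv.Perm (Fin q), ∑ i, ((X (τ i) : ℝ) : TT) = ((∑ i, X i : ℝ) : TT) := by
      intro τ
      rw [WithBot.coe_sum]
      exact Equiv.sum_comp τ fun i => ((X i : ℝ) : TT)
    refine WithBot.le_of_add_le_add_right (z := ((∑ i, X i : ℝ) : TT)) WithBot.coe_ne_bot ?_
    rw [← hX τ, ← Finset.sum_add_distrib, hX τ, ← hX σ, ← Finset.sum_add_distrib]
    refine Finset.sum_le_sum fun i _ => ?_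
    rw [hσ]
    exact hle _ _
  exact ⟨heq, heq ▸ hne⟩

lemma tg_adj (x : Fin (n + 1) → ℝ) (i : Fin m) (j : Fin (n + 1)) :
    (tangentGraph Wp Wn x).Adj (Sum.inl i) (Sum.inr j) ↔ isTEdge Wp Wn x i j := by
  simp [tangentGraph]

lemma tg_adj' (x : Fin (n + 1) → ℝ) (i : Fin m) (j : Fin (n + 1)) :
    (tangentGraph Wp Wn x).Adj (Sum.inr j) (Sum.inl i) ↔ isTEdge Wp Wn x i j := by
  simp [tangentGraph]

lemma tg_ll (x : Fin (n + 1) → ℝ) (i i' : Fin m) :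
    ¬ (tangentGraph Wp Wn x).Adj (Sum.inl i) (Sum.inl i') := by
  simp [tangentGraph]

lemma tg_rr (x : Fin (n + 1) → ℝ) (i i' : Fin (n + 1)) :
    ¬ (tangentGraph Wp Wn x).Adj (Sum.inr i) (Sum.inr i') := by
  simp [tangentGraph]

lemma no_cycle (hgen : TropGeneric (tmod Wp Wn)) (x : Fin (n + 1) → ℝ) (i : Fin m)
    (w : (tangentGraph Wp Wn x).Walk (Sum.inl i) (Sum.inl i)) (hw : w.IsCycle) : False := by
  have h3 := hw.three_le_length
  have hadj : ∀ t, t < w.length → (tangentGraph Wp Wn x).Adj (w.getVert t) (w.getVert (t + 1)) :=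
    fun t ht => w.adj_getVert_succ ht
  have hL : w.getVert w.length = Sum.inl i := w.getVert_length
  have h0 : w.getVert 0 = Sum.inl i := w.getVert_zero
  have hinj := hw.getVert_injOn'
  have hpar : ∀ t, t ≤ w.length → (t % 2 = 0 → ∃ i, w.getVert t = Sum.inl i) ∧
      (t % 2 = 1 → ∃ j, w.getVert t = Sum.inr j) := by
    intro t
    induction t with
    | zero => intro _; exact ⟨fun _ => ⟨i, h0⟩, fun h => by simp at h⟩
    | succ t ih =>
      intro ht
      have ih := ih (by omega)
      have ha := hadj t (by omega)
      constructor
      · intro h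
        obtain ⟨j, hj⟩ := ih.2 (by omega)
        rw [hj] at ha
        rcases hv : w.getVert (t + 1) with i' | j'
        · exact ⟨i', rfl⟩
        · rw [hv] at ha; exact absurd ha (tg_rr _ _ _)
      · intro h
        obtain ⟨j, hj⟩ := ih.1 (by omega)
        rw [hj] at ha
        rcases hv : w.getVert (t + 1) with i' | j'
        · rw [hv] at ha; exact absurd ha (tg_ll _ _ _)
        · exact ⟨j', rfl⟩
  have heven : w.length % 2 = 0 := by
    by_contra h
    obtain ⟨j, hj⟩ := (hpar w.length le_rfl).2 (by omega)
    rw [hL] at hj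
    simp at hj
  obtain ⟨k, hk⟩ : ∃ k, w.length = 2 * (k + 2) := ⟨w.length / 2 - 2, by omega⟩
  have hr : ∀ t : Fin (k + 2), ∃ i, w.getVert (2 * t.val) = Sum.inl i := fun t =>
    (hpar _ (by omega)).1 (by omega)
  have hc : ∀ t : Fin (k + 2), ∃ j, w.getVert (2 * t.val + 1) = Sum.inr j := fun t =>
    (hpar _ (by omega)).2 (by omega)
  choose r hr using hr
  choose c hc using hc
  have hrinj : Function.Injective r := by
    intro s t hst
    have : 2 * s.val = 2 * t.val := hinj (by simp only [Set.mem_ofPred_eq]; omega)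
      (by simp only [Set.mem_ofPred_eq]; omega) (by rw [hr, hr, hst])
    exact Fin.ext (by omega)
  have hcinj : Function.Injective c := by
    intro s t hst
    have : 2 * s.val + 1 = 2 * t.val + 1 := hinj (by simp only [Set.mem_ofPred_eq]; omega)
      (by simp only [Set.mem_ofPred_eq]; omega) (by rw [hc, hc, hst])
    exact Fin.ext (by omega)
  have e1 : ∀ t, isTEdge Wp Wn x (r t) (c t) := by
    intro t
    have := hadj (2 * t.val) (by omega)
    rw [hr, hc] at this
    exact (tg_adj _ _ _).1 this
  have e2 : ∀ t, isTEdge Wp Wn x (r (finRotate (k + 2) t)) (c t) := by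
    intro t
    rw [finRotate_apply]
    have := hadj (2 * t.val + 1) (by omega)
    have h2 : w.getVert (2 * t.val + 1 + 1) = Sum.inl (r (t + 1)) := by
      rw [← hr, Fin.val_add_one]
      split_ifs with h
      · subst h
        have h6 : 2 * (Fin.last (k + 1)).val + 1 + 1 = w.length := by
          rw [hk, Fin.val_last]; ring
        rw [h6, mul_zero, h0, hL]
      · rfl
    rw [hc, h2] at this
    exact (tg_adj' _ _ _).1 this
  have hD : ∀ t, tdot (tmod Wp Wn (r t)) (toT x) ≠ ⊥ := by
    intro t hb
    have h1 := (e1 t).1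
    have : tdot (Wp (r t)) (toT x) ≤ tdot (tmod Wp Wn (r t)) (toT x) :=
      Finset.sup_le fun l _ => le_trans (add_le_add_left (le_max_left _ _) _)
        (le_tdot (tmod Wp Wn (r t)) x l)
    rw [hb, le_bot_iff] at this
    exact h1.2.ne' this
  have t1 := tper_tight (M := fun a b => tmod Wp Wn (r a) (c b)) (X := fun b => x (c b))
    (D := fun a => tdot (tmod Wp Wn (r a)) (toT x)) hD (fun a b => le_tdot _ _ _) 1
    (fun a => (e1 a).2)
  have t2 := tper_tight (M := fun a b => tmod Wp Wn (r a) (c b)) (X := fun b => x (c b))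
    (D := fun a => tdot (tmod Wp Wn (r a)) (toT x)) hD (fun a b => le_tdot _ _ _)
    (finRotate (k + 2))⁻¹
    (fun a => by
      have := (e2 ((finRotate (k + 2))⁻¹ a)).2
      rw [show (finRotate (k + 2)) ((finRotate (k + 2))⁻¹ a) = a from
        Equiv.apply_symm_apply (finRotate (k + 2)) a] at this
      exact this)
  rcases hgen (k + 2) r c hrinj hcinj with h | h
  · exact t1.2 h
  · refine h (Or.inr ⟨1, (finRotate (k + 2))⁻¹, fun he => ?_, t1.1, t2.1⟩)
    have h5 := congrArg (fun σ : Equiv.Perm (Fin (k + 2)) => σ⁻¹ 0) he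
    simp only [inv_one, inv_inv, Equiv.Perm.coe_one, id_eq, finRotate_apply] at h5
    simp at h5

lemma tg_acyclic (hgen : TropGeneric (tmod Wp Wn)) (x : Fin (n + 1) → ℝ) :
    (tangentGraph Wp Wn x).IsAcyclic := by
  intro v w hw
  rcases v with i | j
  · exact no_cycle hgen x i w hw
  · have h1 := w.adj_snd hw.not_nil
    have hs : w.snd ∈ w.support := by simp
    rcases hv : w.snd with i' | j'
    · rw [hv] at hs
      exact no_cycle hgen x i' (w.rotate _ hs) (hw.rotate hs)
    · rw [hv] at h1
      exact tg_rr _ _ _ h1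

end Aux3

section Aux4

open SimpleGraph

lemma acyclic_card_le {V : Type*} [Fintype V] [Nonempty V] {G : SimpleGraph V} (h : G.IsAcyclic) :
    G.edgeFinset.card + 1 ≤ Fintype.card V := by
  obtain ⟨F, h1, _, h2⟩ := Connected.exists_isTree_le_of_le_of_isAcyclic
    (G := (⊤ : SimpleGraph V)) (H := G) connected_top le_top h
  rw [← h2.card_edgeFinset]
  have := Finset.card_le_card (edgeFinset_mono h1)
  omega

lemma forest_cases {V : Type*} [Fintype V] [Nonempty V] {G : SimpleGraph V} (h : G.IsAcyclic) :
    ((∀ u v, G.Reachable u v) ∧ G.edgeFinset.card + 1 = Fintype.card V) ∨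
    ((∃ u v, ¬ G.Reachable u v ∧ ∀ w, G.Reachable u w ∨ G.Reachable v w) ∧
      G.edgeFinset.card + 2 = Fintype.card V) ∨
    G.edgeFinset.card + 3 ≤ Fintype.card V := by
  by_cases hc : ∀ u v, G.Reachable u v
  · left
    have ht : G.IsTree := ⟨⟨hc⟩, h⟩
    exact ⟨hc, ht.card_edgeFinset⟩
  right
  push Not at hc
  obtain ⟨u, v, huv⟩ := hc
  have h1 := h.sup_edge_of_not_reachable huv
  have hne : u ≠ v := fun e => huv (e ▸ Reachable.refl _)
  have c1 : (G ⊔ edge u v).edgeFinset.card = G.edgeFinset.card + 1 := by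
    convert G.card_edgeFinset_sup_edge (s := u) (t := v) (fun ha => huv ha.reachable) hne
  by_cases hc : ∀ u' v', (G ⊔ edge u v).Reachable u' v'
  · left
    have ht : (G ⊔ edge u v).IsTree := ⟨⟨hc⟩, h1⟩
    refine ⟨⟨u, v, huv, fun w => ?_⟩, ?_⟩
    · have := hc u w
      rw [reachable_iff_reflTransGen] at this
      induction this with
      | refl => exact Or.inl (Reachable.refl _)
      | tail _ hbc ih =>
        rw [sup_adj] at hbc
        rcases hbc with hbc | hbc
        · exact ih.imp (fun h => h.trans hbc.reachable) (fun h => h.trans hbc.reachable)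
        · rw [edge_adj] at hbc
          rcases hbc.1 with ⟨_, rfl⟩ | ⟨_, rfl⟩
          · exact Or.inr (Reachable.refl _)
          · exact Or.inl (Reachable.refl _)
    · have := ht.card_edgeFinset
      omega
  · right
    push Not at hc
    obtain ⟨u', v', huv'⟩ := hc
    have hne' : u' ≠ v' := fun e => huv' (e ▸ Reachable.refl _)
    have h2 := h1.sup_edge_of_not_reachable huv'
    have c2 : (G ⊔ edge u v ⊔ edge u' v').edgeFinset.card = (G ⊔ edge u v).edgeFinset.card + 1 := by
      convert (G ⊔ edge u v).card_edgeFinset_sup_edge (s := u') (t := v') (fun ha => huv' ha.reachable) hne'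
    have : (G ⊔ edge u v ⊔ edge u' v').edgeFinset.card + 1 ≤ Fintype.card V := by
      convert acyclic_card_le h2
    omega

end Aux4
section Aux5

open SimpleGraph

variable {m n : ℕ} {Wp Wn : Fin m → Fin (n + 1) → TT} {K : Finset (Fin m)}

def tdeg (Wp Wn : Fin m → Fin (n + 1) → TT) (x : Fin (n + 1) → ℝ) (i : Fin m) : ℕ :=
  (Finset.univ.filter fun j => isTEdge Wp Wn x i j).card

lemma tdeg_eq (hsign : ∀ i j, min (Wp i j) (Wn i j) = ⊥) (x : Fin (n + 1) → ℝ) (i : Fin m) :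
    tdeg Wp Wn x i = (degIn Wp Wn x i).ncard + (degOut Wp Wn x i).ncard := by
  rw [← Set.ncard_union_eq (deg_disj hsign x i) (Set.toFinite _) (Set.toFinite _), tdeg,
    ← Set.ncard_coe_finset]
  congr 1
  ext j
  simp [tedge_iff_deg hsign]

lemma in_pos (hsign : ∀ i j, min (Wp i j) (Wn i j) = ⊥) (x : Fin (n + 1) → ℝ) (i : Fin m)
    (h : isHypNode Wp Wn x i) : 0 < (degIn Wp Wn x i).ncard :=
  (Set.ncard_pos (Set.toFinite _)).2 (degIn_nonempty hsign x i h)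

lemma out_pos (hsign : ∀ i j, min (Wp i j) (Wn i j) = ⊥) (x : Fin (n + 1) → ℝ) (i : Fin m)
    (h : isHypNode Wp Wn x i) : 0 < (degOut Wp Wn x i).ncard :=
  (Set.ncard_pos (Set.toFinite _)).2 (degOut_nonempty hsign x i h)

lemma exu_of_ncard {s : Set (Fin (n + 1))} (h : s.ncard = 1) : ∃! j, j ∈ s := by
  obtain ⟨a, rfl⟩ := Set.ncard_eq_one.1 h
  exact ⟨a, rfl, fun y hy => hy⟩

lemma deg11_of (hsign : ∀ i j, min (Wp i j) (Wn i j) = ⊥) (x : Fin (n + 1) → ℝ) (i : Fin m)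
    (h : isHypNode Wp Wn x i) (hd : tdeg Wp Wn x i = 2) : deg11 Wp Wn x i := by
  rw [tdeg_eq hsign] at hd
  have := in_pos hsign x i h
  have := out_pos hsign x i h
  exact ⟨exu_of_ncard (by omega), exu_of_ncard (by omega)⟩

lemma deg3_of (hsign : ∀ i j, min (Wp i j) (Wn i j) = ⊥) (x : Fin (n + 1) → ℝ) (i : Fin m)
    (h : isHypNode Wp Wn x i) (hd : tdeg Wp Wn x i = 3) :
    deg21 Wp Wn x i ∨ deg12 Wp Wn x i := by
  rw [tdeg_eq hsign] at hd
  have := in_pos hsign x i h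
  have := out_pos hsign x i h
  rcases (show (degIn Wp Wn x i).ncard = 2 ∧ (degOut Wp Wn x i).ncard = 1 ∨
    (degIn Wp Wn x i).ncard = 1 ∧ (degOut Wp Wn x i).ncard = 2 by omega) with h | h
  · exact Or.inl ⟨h.1, exu_of_ncard h.2⟩
  · exact Or.inr ⟨exu_of_ncard h.1, h.2⟩

def embV (Wp Wn : Fin m → Fin (n + 1) → TT) (x : Fin (n + 1) → ℝ) :
    ({i // isHypNode Wp Wn x i} ⊕ Fin (n + 1)) ↪ TGV m n :=
  ⟨Sum.map Subtype.val id, Sum.map_injective.2 ⟨Subtype.val_injective, Function.injective_id⟩⟩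

lemma embV_supp (x : Fin (n + 1) → ℝ) (w : TGV m n) :
    w ∈ suppV Wp Wn x ↔ ∃ v, embV Wp Wn x v = w := by
  rcases w with i | j
  · constructor
    · intro h; exact ⟨Sum.inl ⟨i, h⟩, rfl⟩
    · rintro ⟨v | v, hv⟩
      · have : v.1 = i := Sum.inl_injective hv
        subst this
        exact v.2
      · exact absurd hv (by simp [embV])
  · exact ⟨fun _ => ⟨Sum.inr j, rfl⟩, fun _ => trivial⟩

lemma edges_eq (x : Fin (n + 1) → ℝ)
    {inst : Fintype ((tangentGraph Wp Wn x).comap (embV Wp Wn x)).edgeSet} :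
    ((tangentGraph Wp Wn x).comap (embV Wp Wn x)).edgeFinset.card =
      ∑ i ∈ Finset.univ.filter (isHypNode Wp Wn x), tdeg Wp Wn x i := by
  have hb : ((tangentGraph Wp Wn x).comap (embV Wp Wn x)).IsBipartiteWith
      ((Finset.univ.map ⟨Sum.inl, Sum.inl_injective⟩ :
        Finset ({i // isHypNode Wp Wn x i} ⊕ Fin (n + 1))) : Set _)
      ((Finset.univ.map ⟨Sum.inr, Sum.inr_injective⟩ :
        Finset ({i // isHypNode Wp Wn x i} ⊕ Fin (n + 1))) : Set _) := by
    constructor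
    · rw [Set.disjoint_left]
      rintro (a | a) <;> simp
    · rintro (a | a) (b | b) h
      · exact absurd h (tg_ll (Wp := Wp) (Wn := Wn) x _ _)
      · left; simp
      · right; simp
      · exact absurd h (tg_rr (Wp := Wp) (Wn := Wn) x _ _)
  have h1 := isBipartiteWith_sum_degrees_eq_card_edges hb
  rw [← Finset.sum_subtype_eq_sum_filter, Finset.subtype_univ]
  rw [Finset.sum_map] at h1
  have h2 : ∀ a : {i // isHypNode Wp Wn x i},
      ((tangentGraph Wp Wn x).comap (embV Wp Wn x)).degree (Sum.inl a) = tdeg Wp Wn x a := by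
    intro a
    rw [← card_neighborFinset_eq_degree, tdeg,
      ← Finset.card_map ⟨(Sum.inr : _ → {i // isHypNode Wp Wn x i} ⊕ Fin (n + 1)),
        Sum.inr_injective⟩]
    congr 1
    ext v
    rw [mem_neighborFinset]
    rcases v with b | b
    · simp only [comap_adj, embV, Function.Embedding.coeFn_mk, Sum.map_inl, tg_ll,
        Finset.mem_map, reduceCtorEq, and_false, exists_false]
    · simp only [comap_adj, embV, Function.Embedding.coeFn_mk, Sum.map_inl, Sum.map_inr, tg_adj,
        Finset.mem_map, Sum.inr.injEq, exists_eq_right, Finset.mem_filter, Finset.mem_univ,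
        true_and, id]
  have h3 : ∑ a : {i // isHypNode Wp Wn x i}, tdeg Wp Wn x a =
      ((tangentGraph Wp Wn x).comap (embV Wp Wn x)).edgeFinset.card := by
    rw [← Finset.sum_congr rfl fun a _ => h2 a]
    convert h1
    rfl
  exact h3.symm

lemma edges_eq' (x : Fin (n + 1) → ℝ) (H : Finset (Fin m)) (hH : ∀ i, i ∈ H ↔ isHypNode Wp Wn x i)
    {inst : Fintype ((tangentGraph Wp Wn x).comap (embV Wp Wn x)).edgeSet} :
    ((tangentGraph Wp Wn x).comap (embV Wp Wn x)).edgeFinset.card =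
      ∑ i ∈ H, tdeg Wp Wn x i := by
  rw [edges_eq]
  refine Finset.sum_congr ?_ fun _ _ => rfl
  ext i
  rw [hH]
  simp

lemma reach_lift (x : Fin (n + 1) → ℝ) {u v} :
    ((tangentGraph Wp Wn x).comap (embV Wp Wn x)).Reachable u v ↔
    (tangentGraph Wp Wn x).Reachable (embV Wp Wn x u) (embV Wp Wn x v) := by
  constructor
  · intro h
    exact h.map (Embedding.comap (embV Wp Wn x) (tangentGraph Wp Wn x)).toHom
  · intro h
    have key : ∀ w, (tangentGraph Wp Wn x).Reachable (embV Wp Wn x u) w →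
        ∃ v, embV Wp Wn x v = w ∧
          ((tangentGraph Wp Wn x).comap (embV Wp Wn x)).Reachable u v := by
      intro w hw
      rw [reachable_iff_reflTransGen] at hw
      induction hw with
      | refl => exact ⟨u, rfl, Reachable.refl _⟩
      | @tail b c _ hbc ih =>
        obtain ⟨v, rfl, hv⟩ := ih
        have hc : c ∈ suppV Wp Wn x := by
          rcases c with i | j
          · rcases v with a | a
            · exact absurd hbc (tg_ll _ _ _)
            · exact ((tg_adj' _ _ _).1 hbc).1
          · trivial
        obtain ⟨v', rfl⟩ := (embV_supp x c).1 hc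
        exact ⟨v', rfl, hv.trans (Adj.reachable hbc)⟩
    obtain ⟨v', h1, h2⟩ := key _ h
    rw [(embV Wp Wn x).injective h1] at h2
    exact h2

lemma count_cases (hsign : ∀ i j, min (Wp i j) (Wn i j) = ⊥)
    (hrow : ∀ i, ∃ j, max (Wp i j) (Wn i j) ≠ ⊥)
    (hgen : TropGeneric (tmod Wp Wn)) (hK : K.card + 1 = n)
    {x : Fin (n + 1) → ℝ} (hx : toT x ∈ edgeEK Wp Wn K) :
    ((∃ ℓ, ℓ ∉ K ∧ ∀ i, isHypNode Wp Wn x i ↔ i ∈ insert ℓ K) ∧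
      (∀ u v, u ∈ suppV Wp Wn x → v ∈ suppV Wp Wn x → (tangentGraph Wp Wn x).Reachable u v) ∧
      ∀ i, isHypNode Wp Wn x i → deg11 Wp Wn x i) ∨
    ((∀ i, isHypNode Wp Wn x i ↔ i ∈ K) ∧
      (∀ u v, u ∈ suppV Wp Wn x → v ∈ suppV Wp Wn x → (tangentGraph Wp Wn x).Reachable u v) ∧
      ∃ k ∈ K, (deg21 Wp Wn x k ∨ deg12 Wp Wn x k) ∧
        ∀ i, isHypNode Wp Wn x i → i ≠ k → deg11 Wp Wn x i) ∨
    ((∀ i, isHypNode Wp Wn x i ↔ i ∈ K) ∧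
      (∀ i, isHypNode Wp Wn x i → deg11 Wp Wn x i) ∧
      ∃ u ∈ suppV Wp Wn x, ∃ v ∈ suppV Wp Wn x, ¬ (tangentGraph Wp Wn x).Reachable u v ∧
        ∀ w ∈ suppV Wp Wn x, (tangentGraph Wp Wn x).Reachable u w ∨
          (tangentGraph Wp Wn x).Reachable v w) := by
  have hac : ((tangentGraph Wp Wn x).comap (embV Wp Wn x)).IsAcyclic :=
    (tg_acyclic hgen x).of_comap _
  set Hy := Finset.univ.filter (isHypNode Wp Wn x) with hHy
  have hmem : ∀ i, i ∈ Hy ↔ isHypNode Wp Wn x i := fun i => by simp [hHy]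
  have hKH : K ⊆ Hy := by
    intro i hi
    rw [hmem, hyp_iff hrow]
    rw [mem_edge_iff] at hx
    exact ⟨hx.1 i hi, hx.2 i⟩
  have hcV : Fintype.card ({i // isHypNode Wp Wn x i} ⊕ Fin (n + 1)) = Hy.card + (n + 1) := by
    rw [Fintype.card_sum, Fintype.card_fin, Fintype.card_subtype]
  have hd2 : ∀ i ∈ Hy, 2 ≤ tdeg Wp Wn x i := by
    intro i hi
    rw [hmem] at hi
    rw [tdeg_eq hsign]
    have := in_pos hsign x i hi
    have := out_pos hsign x i hi
    omega
  have hsum : ∑ _i ∈ Hy, 2 = 2 * Hy.card := by simp [mul_comm]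
  have hge := Finset.sum_le_sum hd2
  rw [hsum] at hge
  have hKc := Finset.card_le_card hKH
  have all2 : ∑ i ∈ Hy, tdeg Wp Wn x i = 2 * Hy.card →
      ∀ i, isHypNode Wp Wn x i → deg11 Wp Wn x i := by
    intro h i hi
    rw [← hsum] at h
    exact deg11_of hsign x i hi ((Finset.sum_eq_sum_iff_of_le hd2).1 h.symm i ((hmem i).2 hi)).symm
  have hreach : (∀ u v, ((tangentGraph Wp Wn x).comap (embV Wp Wn x)).Reachable u v) →
      ∀ u v, u ∈ suppV Wp Wn x → v ∈ suppV Wp Wn x → (tangentGraph Wp Wn x).Reachable u v := by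
    intro h u v hu hv
    obtain ⟨u, rfl⟩ := (embV_supp x u).1 hu
    obtain ⟨v, rfl⟩ := (embV_supp x v).1 hv
    exact (reach_lift x).1 (h u v)
  have hHK : Hy.card = K.card → ∀ i, isHypNode Wp Wn x i ↔ i ∈ K := by
    intro h i
    rw [← hmem, Finset.eq_of_subset_of_card_le hKH h.le]
  rcases forest_cases hac with ⟨h1, h2⟩ | ⟨⟨u, v, huv, hw⟩, h2⟩ | h2
  · rw [edges_eq' x Hy hmem, hcV] at h2
    rcases (show Hy.card = K.card + 1 ∨ Hy.card = K.card by omega) with hc | hc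
    · left
      refine ⟨?_, hreach h1, all2 (by omega)⟩
      obtain ⟨ℓ, hl, hl'⟩ := Finset.exists_eq_insert_iff.2 ⟨hKH, hc.symm⟩
      exact ⟨ℓ, hl, fun i => by rw [hl', hmem]⟩
    · right; left
      refine ⟨hHK hc, hreach h1, ?_⟩
      have hex : ∃ k ∈ Hy, tdeg Wp Wn x k ≠ 2 := by
        by_contra! hcon
        rw [Finset.sum_congr rfl hcon, hsum] at h2
        omega
      obtain ⟨k, hk, hk2⟩ := hex
      have hk3 := hd2 k hk
      have hs := Finset.add_sum_erase Hy (tdeg Wp Wn x) hk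
      have hd2' : ∀ i ∈ Hy.erase k, 2 ≤ tdeg Wp Wn x i :=
        fun i hi => hd2 i (Finset.mem_of_mem_erase hi)
      have hge' := Finset.sum_le_sum hd2'
      have hce := Finset.card_erase_add_one hk
      have hsum' : ∑ _i ∈ Hy.erase k, 2 = 2 * (Hy.erase k).card := by
        rw [Finset.sum_const, smul_eq_mul, mul_comm]
      refine ⟨k, ((hHK hc) k).1 ((hmem k).1 hk), deg3_of hsign x k ((hmem k).1 hk) (by omega),
        fun i hi hik => deg11_of hsign x i hi ?_⟩
      exact ((Finset.sum_eq_sum_iff_of_le hd2').1 (by omega) i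
        (Finset.mem_erase.2 ⟨hik, (hmem i).2 hi⟩)).symm
  · right; right
    rw [edges_eq' x Hy hmem, hcV] at h2
    have hc : Hy.card = K.card := by omega
    refine ⟨hHK hc, all2 (by omega), _, (embV_supp x _).2 ⟨u, rfl⟩, _, (embV_supp x _).2 ⟨v, rfl⟩,
      fun h => huv ((reach_lift x).2 h), ?_⟩
    intro w hws
    obtain ⟨w, rfl⟩ := (embV_supp x w).1 hws
    exact (hw w).imp (reach_lift x).1 (reach_lift x).1
  · rw [edges_eq' x Hy hmem, hcV] at h2
    omega

end Aux5
section Aux6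

open SimpleGraph

variable {m n : ℕ} {Wp Wn : Fin m → Fin (n + 1) → TT} {K : Finset (Fin m)}

lemma dn_iff (x : Fin (n + 1) → ℝ) (l : Fin m) (u v : TGV m n) :
    (delNode Wp Wn x l).Adj u v ↔
      (tangentGraph Wp Wn x).Adj u v ∧ u ≠ Sum.inl l ∧ v ≠ Sum.inl l := by
  rcases u with i | j <;> rcases v with i' | j' <;>
    simp [delNode, tangentGraph, tedgeRel]

lemma de_iff (x : Fin (n + 1) → ℝ) (k : Fin m) (j₀ : Fin (n + 1)) (u v : TGV m n) :
    (delEdge Wp Wn x k j₀).Adj u v ↔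
      (tangentGraph Wp Wn x).Adj u v ∧ ¬ (u = Sum.inl k ∧ v = Sum.inr j₀) ∧
        ¬ (v = Sum.inl k ∧ u = Sum.inr j₀) := by
  rcases u with i | j <;> rcases v with i' | j' <;>
    simp [delEdge, tangentGraph, tedgeRel]

lemma dn_le (x : Fin (n + 1) → ℝ) (l : Fin m) :
    delNode Wp Wn x l ≤ tangentGraph Wp Wn x := fun _ _ h => ((dn_iff x l _ _).1 h).1

lemma de_le (x : Fin (n + 1) → ℝ) (k : Fin m) (j₀ : Fin (n + 1)) :
    delEdge Wp Wn x k j₀ ≤ tangentGraph Wp Wn x := fun _ _ h => ((de_iff x k j₀ _ _).1 h).1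

lemma dn_le_de (x : Fin (n + 1) → ℝ) (k : Fin m) (j₀ : Fin (n + 1)) :
    delNode Wp Wn x k ≤ delEdge Wp Wn x k j₀ := by
  intro u v h
  rw [dn_iff] at h
  rw [de_iff]
  exact ⟨h.1, fun h' => h.2.1 h'.1, fun h' => h.2.2 h'.1⟩

lemma sep (hgen : TropGeneric (tmod Wp Wn)) (x : Fin (n + 1) → ℝ) {l : Fin m}
    {j j' : Fin (n + 1)} (h : isTEdge Wp Wn x l j) (h' : isTEdge Wp Wn x l j') (hne : j ≠ j') :
    ¬ (delNode Wp Wn x l).Reachable (Sum.inr j) (Sum.inr j') := by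
  intro hr
  have hb := isAcyclic_iff_forall_adj_isBridge.1 (tg_acyclic hgen x) ((tg_adj x l j).2 h)
  rw [isBridge_iff] at hb
  apply hb
  have h1 : ((tangentGraph Wp Wn x).deleteEdges {s(Sum.inl l, Sum.inr j)}).Reachable
      (Sum.inl l) (Sum.inr j') := by
    apply Adj.reachable
    rw [deleteEdges_adj]
    refine ⟨(tg_adj x l j').2 h', ?_⟩
    simp [hne.symm]
  refine h1.trans (Reachable.mono ?_ hr.symm)
  intro u v huv
  rw [dn_iff] at huv
  rw [deleteEdges_adj]
  refine ⟨huv.1, ?_⟩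
  simp only [Set.mem_singleton_iff, Sym2.eq_iff]
  rintro (⟨rfl, -⟩ | ⟨-, rfl⟩)
  · exact huv.2.1 rfl
  · exact huv.2.2 rfl

lemma cover {H : SimpleGraph (TGV m n)} (x : Fin (n + 1) → ℝ) {l : Fin m}
    (hH : H ≤ tangentGraph Wp Wn x) {w : TGV m n} (hw : H.Reachable (Sum.inl l) w) :
    w = Sum.inl l ∨ ∃ j, H.Adj (Sum.inl l) (Sum.inr j) ∧
      (delNode Wp Wn x l).Reachable (Sum.inr j) w := by
  rw [reachable_iff_reflTransGen] at hw
  induction hw with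
  | refl => exact Or.inl rfl
  | @tail b c _ hbc ih =>
    by_cases hc : c = Sum.inl l
    · exact Or.inl hc
    right
    by_cases hb : b = Sum.inl l
    · subst hb
      rcases c with i | j
      · exact absurd (hH hbc) (tg_ll x _ _)
      · exact ⟨j, hbc, Reachable.refl _⟩
    · obtain ⟨j, h1, h2⟩ := ih.resolve_left hb
      exact ⟨j, h1, h2.trans (Adj.reachable ((dn_iff x l _ _).2 ⟨hH hbc, hb, hc⟩))⟩

lemma closed_reach {H : SimpleGraph (TGV m n)} (x : Fin (n + 1) → ℝ)
    (hH : H ≤ tangentGraph Wp Wn x) (P : Finset (Fin (n + 1)))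
    (h : ∀ i j j', H.Adj (Sum.inl i) (Sum.inr j) → H.Adj (Sum.inl i) (Sum.inr j') →
      j ∈ P → j' ∈ P) {j j' : Fin (n + 1)} (hr : H.Reachable (Sum.inr j) (Sum.inr j'))
    (hj : j ∈ P) : j' ∈ P := by
  have key : ∀ w, H.Reachable (Sum.inr j) w →
      (∀ b, w = Sum.inr b → b ∈ P) ∧
      (∀ i, w = Sum.inl i → ∀ b, H.Adj (Sum.inl i) (Sum.inr b) → b ∈ P) := by
    intro w hw
    rw [reachable_iff_reflTransGen] at hw
    induction hw with
    | refl =>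
      refine ⟨fun b hb => ?_, fun i hi => ?_⟩
      · rw [← Sum.inr_injective hb]; exact hj
      · simp at hi
    | @tail b c _ hbc ih =>
      rcases b with i | a <;> rcases c with i' | a'
      · exact absurd (hH hbc) (tg_ll x _ _)
      · refine ⟨fun b hb => ?_, fun i hi => ?_⟩
        · rw [← Sum.inr_injective hb]; exact ih.2 i rfl a' hbc
        · simp at hi
      · refine ⟨fun b hb => ?_, fun i hi b hb => ?_⟩
        · simp at hb
        · rw [← Sum.inl_injective hi] at hb
          exact h i' a b hbc.symm hb (ih.1 a rfl)
      · exact absurd (hH hbc) (tg_rr x _ _)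
  exact (key _ hr).1 j' rfl

/-- conditions at a hyperplane node -/
lemma cond_of_closed (hsign : ∀ i j, min (Wp i j) (Wn i j) = ⊥) (x : Fin (n + 1) → ℝ) (i : Fin m)
    (J : Finset (Fin (n + 1)))
    (h : ∀ j j', isTEdge Wp Wn x i j → isTEdge Wp Wn x i j' → j ∈ J → j' ∈ J) :
    ((∃ j ∈ J, j ∈ degIn Wp Wn x i) → ∃ j ∈ J, j ∈ degOut Wp Wn x i) ∧
    ((∃ j ∈ J, j ∈ degOut Wp Wn x i) → ∃ j ∈ J, j ∈ degIn Wp Wn x i) := by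
  constructor
  · rintro ⟨j, hj, hd⟩
    have he := (tedge_iff_deg hsign x i j).2 (Or.inl hd)
    obtain ⟨j', hj'⟩ := degOut_nonempty hsign x i he.1
    exact ⟨j', h j j' he ((tedge_iff_deg hsign x i j').2 (Or.inr hj')) hj, hj'⟩
  · rintro ⟨j, hj, hd⟩
    have he := (tedge_iff_deg hsign x i j).2 (Or.inr hd)
    obtain ⟨j', hj'⟩ := degIn_nonempty hsign x i he.1
    exact ⟨j', h j j' he ((tedge_iff_deg hsign x i j').2 (Or.inl hj')) hj, hj'⟩

lemma closed_of_cond (hsign : ∀ i j, min (Wp i j) (Wn i j) = ⊥) (x : Fin (n + 1) → ℝ) (i : Fin m)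
    (J : Finset (Fin (n + 1))) (h11 : deg11 Wp Wn x i)
    (h1 : (∃ j ∈ J, j ∈ degIn Wp Wn x i) → ∃ j ∈ J, j ∈ degOut Wp Wn x i)
    (h2 : (∃ j ∈ J, j ∈ degOut Wp Wn x i) → ∃ j ∈ J, j ∈ degIn Wp Wn x i) :
    ∀ j j', isTEdge Wp Wn x i j → isTEdge Wp Wn x i j' → j ∈ J → j' ∈ J := by
  intro j j' he he' hj
  rw [tedge_iff_deg hsign] at he he'
  rcases he with he | he <;> rcases he' with he' | he'
  · rwa [← h11.1.unique he he']
  · obtain ⟨b, hb, hb'⟩ := h1 ⟨j, hj, he⟩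
    rwa [h11.2.unique he' hb']
  · obtain ⟨b, hb, hb'⟩ := h2 ⟨j, hj, he⟩
    rwa [h11.1.unique he' hb']
  · rwa [← h11.2.unique he he']

lemma case1 (hsign : ∀ i j, min (Wp i j) (Wn i j) = ⊥)
    (hrow : ∀ i, ∃ j, max (Wp i j) (Wn i j) ≠ ⊥)
    (hgen : TropGeneric (tmod Wp Wn))
    {x : Fin (n + 1) → ℝ} (hx : toT x ∈ edgeEK Wp Wn K)
    {l : Fin m} (hl : l ∉ K) (hH : ∀ i, isHypNode Wp Wn x i ↔ i ∈ insert l K)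
    (hR : ∀ u v, u ∈ suppV Wp Wn x → v ∈ suppV Wp Wn x → (tangentGraph Wp Wn x).Reachable u v)
    (h11 : ∀ i, isHypNode Wp Wn x i → deg11 Wp Wn x i) : CaseBasic Wp Wn K x := by
  have hlh : isHypNode Wp Wn x l := (hH l).2 (Finset.mem_insert_self _ _)
  refine ⟨l, hl, ?_, hH, tg_acyclic hgen x, hR, h11, ?_⟩
  · rw [mem_edge_iff] at hx ⊢
    refine ⟨fun i hi => ?_, hx.2⟩
    exact ((hyp_iff hrow x i).1 ((hH i).2 hi)).1
  · obtain ⟨⟨j₀, hj₀, hu₀⟩, ⟨j₁, hj₁, hu₁⟩⟩ := h11 l hlh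
    have e₀ := (tedge_iff_deg hsign x l j₀).2 (Or.inl hj₀)
    have e₁ := (tedge_iff_deg hsign x l j₁).2 (Or.inr hj₁)
    have hne : j₀ ≠ j₁ := by
      rintro rfl
      exact Set.disjoint_left.1 (deg_disj hsign x l) hj₀ hj₁
    have hsep := sep hgen x e₀ e₁ hne
    have hcov : ∀ j, (delNode Wp Wn x l).Reachable (Sum.inr j₀) (Sum.inr j) ∨
        (delNode Wp Wn x l).Reachable (Sum.inr j₁) (Sum.inr j) := by
      intro j
      rcases cover x le_rfl (hR (Sum.inl l) (Sum.inr j) hlh trivial) with h | ⟨b, hb, hb'⟩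
      · simp at h
      · rw [tg_adj, tedge_iff_deg hsign] at hb
        rcases hb with hb | hb
        · rw [hu₀ b hb] at hb'; exact Or.inl hb'
        · rw [hu₁ b hb] at hb'; exact Or.inr hb'
    refine ⟨j₀, ?_, fun J' => ?_⟩
    · rw [argmaxP_eq hsign x l hlh]
      ext j
      exact ⟨fun h => hu₀ j h, fun h => by rw [Set.mem_singleton_iff.1 h]; exact hj₀⟩
    · rw [feasible_iff hsign hrow hx]
      constructor
      · rintro ⟨hne', hnu, c1, c2⟩
        have hcl : ∀ j j', (delNode Wp Wn x l).Reachable (Sum.inr j) (Sum.inr j') →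
            j ∈ J' → j' ∈ J' := by
          intro j j' hr hj
          refine closed_reach x (dn_le x l) J' ?_ hr hj
          intro i a b ha hb
          rw [dn_iff, tg_adj] at ha hb
          have hi : i ∈ K := by
            have := (hH i).1 ha.1.1
            rw [Finset.mem_insert] at this
            exact this.resolve_left fun h => ha.2.1 (by rw [h])
          exact closed_of_cond hsign x i J' (h11 i ha.1.1) (c1 i hi) (c2 i) a b ha.1 hb.1
        have hj₁' : j₁ ∉ J' := by
          intro h
          obtain ⟨b, hb, hb'⟩ := c2 l ⟨j₁, h, hj₁⟩
          rw [hu₀ b hb'] at hb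
          apply hnu
          ext j
          simp only [Finset.mem_univ, iff_true]
          exact (hcov j).elim (fun h' => hcl _ _ h' hb) (fun h' => hcl _ _ h' h)
        have hsub : ∀ j ∈ J', (delNode Wp Wn x l).Reachable (Sum.inr j₀) (Sum.inr j) := by
          intro j hj
          exact (hcov j).resolve_right fun h => hj₁' (hcl _ _ h.symm hj)
        obtain ⟨a, ha⟩ := Finset.nonempty_iff_ne_empty.2 hne'
        ext j
        simp only [Finset.mem_filter, Finset.mem_univ, true_and]
        exact ⟨hsub j, fun h => hcl _ _ ((hsub a ha).symm.trans h) ha⟩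
      · rintro rfl
        have hcl : ∀ i, i ≠ l → ∀ j j', isTEdge Wp Wn x i j → isTEdge Wp Wn x i j' →
            j ∈ (Finset.univ.filter fun j =>
              (delNode Wp Wn x l).Reachable (Sum.inr j₀) (Sum.inr j)) →
            j' ∈ (Finset.univ.filter fun j =>
              (delNode Wp Wn x l).Reachable (Sum.inr j₀) (Sum.inr j)) := by
          intro i hi j j' he he' hj
          simp only [Finset.mem_filter, Finset.mem_univ, true_and] at hj ⊢
          have a1 : (delNode Wp Wn x l).Adj (Sum.inl i) (Sum.inr j) :=
            (dn_iff x l _ _).2 ⟨(tg_adj x i j).2 he, by simpa using hi, by simp⟩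
          have a2 : (delNode Wp Wn x l).Adj (Sum.inl i) (Sum.inr j') :=
            (dn_iff x l _ _).2 ⟨(tg_adj x i j').2 he', by simpa using hi, by simp⟩
          exact hj.trans (a1.symm.reachable.trans a2.reachable)
        refine ⟨?_, ?_, fun i hi => ?_, fun i => ?_⟩
        · apply Finset.nonempty_iff_ne_empty.1
          exact ⟨j₀, by simp⟩
        · intro h
          have := Finset.mem_univ j₁
          rw [← h] at this
          simp only [Finset.mem_filter, Finset.mem_univ, true_and] at this
          exact hsep this
        · exact (cond_of_closed hsign x i _ (hcl i (fun h => hl (h ▸ hi)))).1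
        · by_cases hi : i = l
          · subst hi
            rintro ⟨j, hj, hj'⟩
            rw [hu₁ j hj'] at hj
            simp only [Finset.mem_filter, Finset.mem_univ, true_and] at hj
            exact absurd hj hsep
          · exact (cond_of_closed hsign x i _ (hcl i hi)).2

lemma has_coord (hsign : ∀ i j, min (Wp i j) (Wn i j) = ⊥) (x : Fin (n + 1) → ℝ)
    {u : TGV m n} (hu : u ∈ suppV Wp Wn x) :
    ∃ j, (tangentGraph Wp Wn x).Reachable u (Sum.inr j) := by
  rcases u with i | j
  · obtain ⟨j, hj⟩ := degIn_nonempty hsign x i hu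
    exact ⟨j, Adj.reachable ((tg_adj x i j).2 ((tedge_iff_deg hsign x i j).2 (Or.inl hj)))⟩
  · exact ⟨j, Reachable.refl _⟩

lemma case3 (hsign : ∀ i j, min (Wp i j) (Wn i j) = ⊥)
    (hrow : ∀ i, ∃ j, max (Wp i j) (Wn i j) ≠ ⊥)
    (hgen : TropGeneric (tmod Wp Wn))
    (hfin : ∀ x ∈ coneC Wp Wn, x ≠ (fun _ => (⊥ : TT)) → ∀ j, x j ≠ ⊥)
    {x : Fin (n + 1) → ℝ} (hx : toT x ∈ edgeEK Wp Wn K)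
    (hH : ∀ i, isHypNode Wp Wn x i ↔ i ∈ K)
    (h11 : ∀ i, isHypNode Wp Wn x i → deg11 Wp Wn x i)
    {u v : TGV m n} (hu : u ∈ suppV Wp Wn x) (hv : v ∈ suppV Wp Wn x)
    (huv : ¬ (tangentGraph Wp Wn x).Reachable u v)
    (hw : ∀ w ∈ suppV Wp Wn x, (tangentGraph Wp Wn x).Reachable u w ∨
          (tangentGraph Wp Wn x).Reachable v w) : CaseInterior Wp Wn K x := by
  obtain ⟨ju, hju⟩ := has_coord hsign x hu
  obtain ⟨jv, hjv⟩ := has_coord hsign x hv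
  have hjuv : ∀ w, (tangentGraph Wp Wn x).Reachable u w →
    ¬ (tangentGraph Wp Wn x).Reachable v w := fun w h1 h2 => huv (h1.trans h2.symm)
  obtain ⟨S, hS⟩ : ∃ S : Set (TGV m n), ∀ w, w ∈ S ↔ w ∈ suppV Wp Wn x ∧
      (tangentGraph Wp Wn x).Reachable u w :=
    ⟨{w | w ∈ suppV Wp Wn x ∧ (tangentGraph Wp Wn x).Reachable u w}, fun w => Iff.rfl⟩
  set J : Finset (Fin (n + 1)) := Finset.univ.filter fun j => (Sum.inr j : TGV m n) ∈ S with hJ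
  have hJm : ∀ j, j ∈ J ↔ (tangentGraph Wp Wn x).Reachable u (Sum.inr j) := by
    intro j
    rw [hJ, Finset.mem_filter, hS]
    exact ⟨fun h => h.2.2, fun h => ⟨Finset.mem_univ _, trivial, h⟩⟩
  have huJ : ju ∈ J := (hJm _).2 hju
  have hvJ : jv ∉ J := fun h => hjuv _ ((hJm _).1 h) hjv
  have hcl : ∀ i j j', isTEdge Wp Wn x i j → isTEdge Wp Wn x i j' → j ∈ J → j' ∈ J := by
    intro i j j' he he' hj
    rw [hJm] at hj ⊢
    exact hj.trans ((Adj.reachable ((tg_adj' x i j).2 he)).trans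
      (Adj.reachable ((tg_adj x i j').2 he')))
  have hcl' : ∀ i j j', isTEdge Wp Wn x i j → isTEdge Wp Wn x i j' → j ∈ Jᶜ → j' ∈ Jᶜ := by
    intro i j j' he he' hj
    rw [Finset.mem_compl] at hj ⊢
    exact fun h => hj (hcl i j' j he' he h)
  have f1 : Feasible (edgeEK Wp Wn K) x J := by
    rw [feasible_iff hsign hrow hx]
    exact ⟨Finset.nonempty_iff_ne_empty.1 ⟨ju, huJ⟩, fun h => hvJ (h ▸ Finset.mem_univ _),
      fun i _ => (cond_of_closed hsign x i J (hcl i)).1,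
      fun i => (cond_of_closed hsign x i J (hcl i)).2⟩
  have f2 : Feasible (edgeEK Wp Wn K) x Jᶜ := by
    rw [feasible_iff hsign hrow hx]
    exact ⟨Finset.nonempty_iff_ne_empty.1 ⟨jv, Finset.mem_compl.2 hvJ⟩,
      fun h => Finset.mem_compl.1 (h ▸ Finset.mem_univ ju) huJ,
      fun i _ => (cond_of_closed hsign x i _ (hcl' i)).1,
      fun i => (cond_of_closed hsign x i _ (hcl' i)).2⟩
  refine ⟨interior_of hfin hx f1 f2, hH, tg_acyclic hgen x, h11,
    S, fun w h => ((hS w).1 h).1,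
    ⟨u, (hS u).2 ⟨hu, Reachable.refl _⟩⟩, ⟨v, hv, fun h => huv ((hS v).1 h).2⟩, ?_, ?_⟩
  · intro a b ha hb
    simp only [hS, ha, hb, true_and]
    constructor
    · exact fun h => ⟨fun h' => h'.trans h, fun h' => h'.trans h.symm⟩
    · intro h
      rcases hw a ha with h' | h'
      · exact h'.symm.trans (h.1 h')
      · rcases hw b hb with h'' | h''
        · exact absurd h' (hjuv _ (h.2 h''))
        · exact h'.symm.trans h''
  · intro J'
    rw [← hJ]
    constructor
    · intro hf
      rw [feasible_iff hsign hrow hx] at hf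
      obtain ⟨hne', hnu, c1, c2⟩ := hf
      have hc : ∀ j j', (tangentGraph Wp Wn x).Reachable (Sum.inr j) (Sum.inr j') →
          j ∈ J' → j' ∈ J' := by
        intro j j' hr hj
        refine closed_reach x le_rfl J' ?_ hr hj
        intro i a b ha hb
        rw [tg_adj] at ha hb
        exact closed_of_cond hsign x i J' (h11 i ha.1) (c1 i ((hH i).1 ha.1)) (c2 i) a b ha hb
      have hU : ∀ j, j ∈ J → (j ∈ J' ↔ ju ∈ J') := by
        intro j hj
        have := hju.symm.trans ((hJm j).1 hj)
        exact ⟨hc _ _ this.symm, hc _ _ this⟩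
      have hV : ∀ j, j ∉ J → (j ∈ J' ↔ jv ∈ J') := by
        intro j hj
        rw [hJm] at hj
        have := hjv.symm.trans ((hw (Sum.inr j) trivial).resolve_left hj)
        exact ⟨hc _ _ this.symm, hc _ _ this⟩
      by_cases h1 : ju ∈ J' <;> by_cases h2 : jv ∈ J'
      · exfalso; apply hnu; ext j
        by_cases hj : j ∈ J
        · simp [hU j hj, h1]
        · simp [hV j hj, h2]
      · left; ext j
        by_cases hj : j ∈ J
        · simp [hU j hj, h1, hj]
        · simp [hV j hj, h2, hj]
      · right; ext j
        by_cases hj : j ∈ J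
        · simp [hU j hj, h1, hj]
        · simp [hV j hj, h2, hj]
      · exfalso; apply hne'; ext j
        by_cases hj : j ∈ J
        · simp [hU j hj, h1]
        · simp [hV j hj, h2]
    · rintro (rfl | rfl)
      · exact f1
      · exact f2

lemma case2_core (hsign : ∀ i j, min (Wp i j) (Wn i j) = ⊥)
    (hrow : ∀ i, ∃ j, max (Wp i j) (Wn i j) ≠ ⊥)
    (hgen : TropGeneric (tmod Wp Wn))
    (hfin : ∀ x ∈ coneC Wp Wn, x ≠ (fun _ => (⊥ : TT)) → ∀ j, x j ≠ ⊥)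
    {x : Fin (n + 1) → ℝ} (hx : toT x ∈ edgeEK Wp Wn K)
    (hH : ∀ i, isHypNode Wp Wn x i ↔ i ∈ K)
    (hR : ∀ u v, u ∈ suppV Wp Wn x → v ∈ suppV Wp Wn x → (tangentGraph Wp Wn x).Reachable u v)
    {k : Fin m} (hk : k ∈ K)
    (h11 : ∀ i, isHypNode Wp Wn x i → i ≠ k → deg11 Wp Wn x i)
    {j₁ j₂ j₃ : Fin (n + 1)} (h12 : j₁ ≠ j₂)
    (hd : (degIn Wp Wn x k = {j₁, j₂} ∧ degOut Wp Wn x k = {j₃}) ∨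
      (degOut Wp Wn x k = {j₁, j₂} ∧ degIn Wp Wn x k = {j₃})) :
    IsBreakpoint Wp Wn K x ∧ ∀ J'' : Finset (Fin (n + 1)),
        Feasible (edgeEK Wp Wn K) x J'' ↔
          (J'' = reachJ Wp Wn x k j₁ ∨ J'' = reachJ Wp Wn x k j₂) := by
  have hkh : isHypNode Wp Wn x k := (hH k).2 hk
  have he : ∀ j, isTEdge Wp Wn x k j ↔ j = j₁ ∨ j = j₂ ∨ j = j₃ := by
    intro j
    rw [tedge_iff_deg hsign]
    rcases hd with ⟨h, h'⟩ | ⟨h, h'⟩ <;> rw [h, h'] <;>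
      simp only [Set.mem_insert_iff, Set.mem_singleton_iff] <;> tauto
  have h13 : j₁ ≠ j₃ ∧ j₂ ≠ j₃ := by
    have := Set.disjoint_left.1 (deg_disj hsign x k)
    have := fun j (h : j ∈ degIn Wp Wn x k) => this h
    rcases hd with ⟨h, h'⟩ | ⟨h, h'⟩
    · rw [h, h'] at this
      exact ⟨fun e => this j₁ (by simp) (by simp [e]), fun e => this j₂ (by simp) (by simp [e])⟩
    · rw [h, h'] at this
      exact ⟨fun e => this j₃ (by simp) (by simp [e]), fun e => this j₃ (by simp) (by simp [e])⟩
  have e1 := (he j₁).2 (Or.inl rfl)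
  have e2 := (he j₂).2 (Or.inr (Or.inl rfl))
  have e3 := (he j₃).2 (Or.inr (Or.inr rfl))
  have s12 := sep hgen x e1 e2 h12
  have s13 := sep hgen x e1 e3 h13.1
  have s23 := sep hgen x e2 e3 h13.2
  set R : Fin (n + 1) → Fin (n + 1) → Prop := fun a b =>
    (delNode Wp Wn x k).Reachable (Sum.inr a) (Sum.inr b) with hRdef
  have Rrefl : ∀ a, R a a := fun a => Reachable.refl _
  have Rsymm : ∀ {a b}, R a b → R b a := fun h => Reachable.symm h
  have Rtrans : ∀ {a b c}, R a b → R b c → R a c := fun h h' => Reachable.trans h h'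
  have hcov : ∀ j, R j₁ j ∨ R j₂ j ∨ R j₃ j := by
    intro j
    rcases cover x le_rfl (hR (Sum.inl k) (Sum.inr j) hkh trivial) with h | ⟨b, hb, hb'⟩
    · simp at h
    · rw [tg_adj, he] at hb
      rcases hb with rfl | rfl | rfl
      · exact Or.inl hb'
      · exact Or.inr (Or.inl hb')
      · exact Or.inr (Or.inr hb')
  have hreach : ∀ a j, j ∈ reachJ Wp Wn x k a ↔ ∃ b, isTEdge Wp Wn x k b ∧ b ≠ a ∧ R b j := by
    intro a j
    simp only [reachJ, Finset.mem_filter, Finset.mem_univ, true_and]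
    constructor
    · intro h
      rcases cover x (de_le x k a) h with h | ⟨b, hb, hb'⟩
      · simp at h
      · rw [de_iff, tg_adj] at hb
        exact ⟨b, hb.1, fun e => hb.2.1 ⟨rfl, by rw [e]⟩, hb'⟩
    · rintro ⟨b, hb, hba, hbj⟩
      refine (Adj.reachable ((de_iff x k a (Sum.inl k) (Sum.inr b)).2
        ⟨(tg_adj x k b).2 hb, ?_, ?_⟩)).trans (Reachable.mono (dn_le_de x k a) hbj)
      · simpa using hba
      · simp
  have hF : ∀ J, Feasible (edgeEK Wp Wn K) x J ↔ J ≠ ∅ ∧ J ≠ Finset.univ ∧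
      (∀ a b, R a b → a ∈ J → b ∈ J) ∧ (j₃ ∈ J ↔ j₁ ∈ J ∨ j₂ ∈ J) := by
    intro J
    rw [feasible_iff hsign hrow hx]
    have hkc : (((∃ j ∈ J, j ∈ degIn Wp Wn x k) → ∃ j ∈ J, j ∈ degOut Wp Wn x k) ∧
        ((∃ j ∈ J, j ∈ degOut Wp Wn x k) → ∃ j ∈ J, j ∈ degIn Wp Wn x k)) ↔
        (j₃ ∈ J ↔ j₁ ∈ J ∨ j₂ ∈ J) := by
      have p2 : (∃ j ∈ J, j ∈ ({j₁, j₂} : Set (Fin (n + 1)))) ↔ j₁ ∈ J ∨ j₂ ∈ J := by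
        constructor
        · rintro ⟨j, hj, rfl | h⟩
          · exact Or.inl hj
          · rw [Set.mem_singleton_iff.1 h] at hj; exact Or.inr hj
        · rintro (h | h)
          · exact ⟨_, h, by simp⟩
          · exact ⟨_, h, by simp⟩
      have p1 : (∃ j ∈ J, j ∈ ({j₃} : Set (Fin (n + 1)))) ↔ j₃ ∈ J := by simp
      rcases hd with ⟨h, h'⟩ | ⟨h, h'⟩ <;> rw [h, h', p1, p2] <;> tauto
    rw [← hkc]
    constructor
    · rintro ⟨g1, g2, c1, c2⟩
      refine ⟨g1, g2, ?_, c1 k hk, c2 k⟩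
      intro a b hr hj
      refine closed_reach x (dn_le x k) J ?_ hr hj
      intro i a b ha hb
      rw [dn_iff, tg_adj] at ha hb
      exact closed_of_cond hsign x i J (h11 i ha.1.1 fun h => ha.2.1 (by rw [h]))
        (c1 i ((hH i).1 ha.1.1)) (c2 i) a b ha.1 hb.1
    · rintro ⟨g1, g2, g3, c1, c2⟩
      have hcl : ∀ i, i ≠ k → ∀ j j', isTEdge Wp Wn x i j → isTEdge Wp Wn x i j' →
          j ∈ J → j' ∈ J := by
        intro i hi j j' he he' hj
        have a1 : (delNode Wp Wn x k).Adj (Sum.inl i) (Sum.inr j) :=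
          (dn_iff x k _ _).2 ⟨(tg_adj x i j).2 he, by simpa using hi, by simp⟩
        have a2 : (delNode Wp Wn x k).Adj (Sum.inl i) (Sum.inr j') :=
          (dn_iff x k _ _).2 ⟨(tg_adj x i j').2 he', by simpa using hi, by simp⟩
        exact g3 j j' (a1.symm.reachable.trans a2.reachable) hj
      refine ⟨g1, g2, fun i hi => ?_, fun i => ?_⟩
      · by_cases hik : i = k
        · subst hik; exact c1
        · exact (cond_of_closed hsign x i J (hcl i hik)).1
      · by_cases hik : i = k
        · subst hik; exact c2
        · exact (cond_of_closed hsign x i J (hcl i hik)).2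
  have m1 : ∀ j, j ∈ reachJ Wp Wn x k j₁ ↔ ¬ R j₁ j := by
    intro j
    rw [hreach]
    constructor
    · rintro ⟨b, hb, hb1, hbj⟩ h
      rcases (he b).1 hb with rfl | rfl | rfl
      · exact hb1 rfl
      · exact s12 (Rtrans h (Rsymm hbj))
      · exact s13 (Rtrans h (Rsymm hbj))
    · intro h
      rcases (hcov j).resolve_left h with h | h
      · exact ⟨j₂, e2, h12.symm, h⟩
      · exact ⟨j₃, e3, h13.1.symm, h⟩
  have m2 : ∀ j, j ∈ reachJ Wp Wn x k j₂ ↔ ¬ R j₂ j := by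
    intro j
    rw [hreach]
    constructor
    · rintro ⟨b, hb, hb1, hbj⟩ h
      rcases (he b).1 hb with rfl | rfl | rfl
      · exact s12 (Rtrans hbj (Rsymm h))
      · exact hb1 rfl
      · exact s23 (Rtrans h (Rsymm hbj))
    · intro h
      rcases hcov j with h' | h' | h'
      · exact ⟨j₁, e1, h12, h'⟩
      · exact absurd h' h
      · exact ⟨j₃, e3, h13.2.symm, h'⟩
  have s21 : ¬ R j₂ j₁ := fun h => s12 (Rsymm h)
  have f1 : Feasible (edgeEK Wp Wn K) x (reachJ Wp Wn x k j₁) := by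
    rw [hF]
    refine ⟨Finset.nonempty_iff_ne_empty.1 ⟨j₂, (m1 _).2 s12⟩,
      fun h => (m1 j₁).1 (h ▸ Finset.mem_univ _) (Rrefl _), ?_, ?_⟩
    · intro a b hab ha
      rw [m1] at ha ⊢
      exact fun h => ha (Rtrans h (Rsymm hab))
    · rw [m1, m1, m1]
      exact ⟨fun _ => Or.inr s12, fun _ => s13⟩
  have f2 : Feasible (edgeEK Wp Wn K) x (reachJ Wp Wn x k j₂) := by
    rw [hF]
    refine ⟨Finset.nonempty_iff_ne_empty.1 ⟨j₁, (m2 _).2 s21⟩,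
      fun h => (m2 j₂).1 (h ▸ Finset.mem_univ _) (Rrefl _), ?_, ?_⟩
    · intro a b hab ha
      rw [m2] at ha ⊢
      exact fun h => ha (Rtrans h (Rsymm hab))
    · rw [m2, m2, m2]
      exact ⟨fun _ => Or.inl s21, fun _ => s23⟩
  have n1 : ¬ Feasible (edgeEK Wp Wn K) x (reachJ Wp Wn x k j₁)ᶜ := by
    rw [hF]
    rintro ⟨-, -, -, h⟩
    rw [Finset.mem_compl, Finset.mem_compl, Finset.mem_compl, m1, m1, m1] at h
    exact (h.2 (Or.inl (not_not.2 (Rrefl _)))) s13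
  have n2 : ¬ Feasible (edgeEK Wp Wn K) x (reachJ Wp Wn x k j₂)ᶜ := by
    rw [hF]
    rintro ⟨-, -, -, h⟩
    rw [Finset.mem_compl, Finset.mem_compl, Finset.mem_compl, m2, m2, m2] at h
    exact (h.2 (Or.inr (not_not.2 (Rrefl _)))) s23
  refine ⟨break_of hfin hx n1 (by rw [compl_compl]; exact f1) f2 n2 ?_, ?_⟩
  · rw [Finset.ssubset_iff_of_subset]
    · refine ⟨j₃, (m2 _).2 s23, ?_⟩
      rw [Finset.mem_compl, not_not, m1]
      exact s13
    · intro j hj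
      rw [Finset.mem_compl, m1, not_not] at hj
      rw [m2]
      exact fun h => s12 (Rtrans hj (Rsymm h))
  · intro J
    constructor
    · intro hf
      rw [hF] at hf
      obtain ⟨g1, g2, g3, g4⟩ := hf
      have c : ∀ a j, R a j → (j ∈ J ↔ a ∈ J) :=
        fun a j h => ⟨g3 _ _ (Rsymm h), g3 _ _ h⟩
      have h3 : j₃ ∈ J := by
        by_contra h3
        have h1 : ¬ (j₁ ∈ J ∨ j₂ ∈ J) := fun h => h3 (g4.2 h)
        push Not at h1
        apply g1
        ext j
        rcases hcov j with h | h | h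
        · simp [c _ _ h, h1.1]
        · simp [c _ _ h, h1.2]
        · simp [c _ _ h, h3]
      have hn : ¬ (j₁ ∈ J ∧ j₂ ∈ J) := by
        intro h1
        apply g2
        ext j
        rcases hcov j with h | h | h
        · simp [c _ _ h, h1.1]
        · simp [c _ _ h, h1.2]
        · simp [c _ _ h, h3]
      rcases g4.1 h3 with h1 | h2
      · right
        have h2 : j₂ ∉ J := fun h => hn ⟨h1, h⟩
        ext j
        rw [m2]
        constructor
        · exact fun hj h => h2 ((c _ _ h).1 hj)
        · intro hj
          rcases hcov j with h | h | h
          · exact (c _ _ h).2 h1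
          · exact absurd h hj
          · exact (c _ _ h).2 h3
      · left
        have h1 : j₁ ∉ J := fun h => hn ⟨h, h2⟩
        ext j
        rw [m1]
        constructor
        · exact fun hj h => h1 ((c _ _ h).1 hj)
        · intro hj
          rcases hcov j with h | h | h
          · exact absurd h hj
          · exact (c _ _ h).2 h2
          · exact (c _ _ h).2 h3
    · rintro (rfl | rfl)
      · exact f1
      · exact f2

lemma case2 (hsign : ∀ i j, min (Wp i j) (Wn i j) = ⊥)
    (hrow : ∀ i, ∃ j, max (Wp i j) (Wn i j) ≠ ⊥)
    (hgen : TropGeneric (tmod Wp Wn))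
    (hfin : ∀ x ∈ coneC Wp Wn, x ≠ (fun _ => (⊥ : TT)) → ∀ j, x j ≠ ⊥)
    {x : Fin (n + 1) → ℝ} (hx : toT x ∈ edgeEK Wp Wn K)
    (hH : ∀ i, isHypNode Wp Wn x i ↔ i ∈ K)
    (hR : ∀ u v, u ∈ suppV Wp Wn x → v ∈ suppV Wp Wn x → (tangentGraph Wp Wn x).Reachable u v)
    {k : Fin m} (hk : k ∈ K) (hd : deg21 Wp Wn x k ∨ deg12 Wp Wn x k)
    (h11 : ∀ i, isHypNode Wp Wn x i → i ≠ k → deg11 Wp Wn x i) : CaseBreak Wp Wn K x := by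
  have sing : ∀ {s : Set (Fin (n + 1))}, (∃! j, j ∈ s) → ∃ j, s = {j} := by
    rintro s ⟨j, h1, h2⟩
    refine ⟨j, ?_⟩
    ext b
    exact ⟨fun h => h2 b h, fun h => by rw [Set.mem_singleton_iff.1 h]; exact h1⟩
  have main : ∃ j₁ j₂ j₃, j₁ ≠ j₂ ∧ ((deg21 Wp Wn x k ∧ degIn Wp Wn x k = {j₁, j₂}) ∨
       (deg12 Wp Wn x k ∧ degOut Wp Wn x k = {j₁, j₂})) ∧
      ((degIn Wp Wn x k = {j₁, j₂} ∧ degOut Wp Wn x k = {j₃}) ∨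
      (degOut Wp Wn x k = {j₁, j₂} ∧ degIn Wp Wn x k = {j₃})) := by
    rcases hd with h | h
    · obtain ⟨a, b, hab, he⟩ := Set.ncard_eq_two.1 h.1
      obtain ⟨c, hc⟩ := sing h.2
      exact ⟨a, b, c, hab, Or.inl ⟨h, he⟩, Or.inl ⟨he, hc⟩⟩
    · obtain ⟨a, b, hab, he⟩ := Set.ncard_eq_two.1 h.2
      obtain ⟨c, hc⟩ := sing h.1
      exact ⟨a, b, c, hab, Or.inr ⟨h, he⟩, Or.inr ⟨he, hc⟩⟩
  obtain ⟨j₁, j₂, j₃, h12, hdd, hdd'⟩ := main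
  obtain ⟨hb, hf⟩ := case2_core hsign hrow hgen hfin hx hH hR hk h11 h12 hdd'
  exact ⟨hb, hH, tg_acyclic hgen x, hR, k, hk, hd, h11, j₁, j₂, h12, hdd, hf⟩

end Aux6

/-- Trichotomy for points of a tropical edge `E_K`: such a
point is a tropical basic point, a relative-interior point of an ordinary
segment, or a breakpoint, with the corresponding structure of the tangent
(di)graph and of the feasible directions; and exactly one of the three cases
arises. -/
theorem stmt11 {m n : ℕ} (Wp Wn : Fin m → Fin (n + 1) → TT)
    (hsign : ∀ i j, min (Wp i j) (Wn i j) = ⊥)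
    (hrow : ∀ i, ∃ j, max (Wp i j) (Wn i j) ≠ ⊥)
    (hgen : TropGeneric (tmod Wp Wn))
    (hfin : ∀ x ∈ coneC Wp Wn, x ≠ (fun _ => (⊥ : TT)) → ∀ j, x j ≠ ⊥)
    (K : Finset (Fin m)) (hK : K.card + 1 = n)
    (hU : ∃ (er : Fin K.card → Fin m) (ec : Fin K.card → Fin (n + 1)),
      Function.Injective er ∧ (∀ a, er a ∈ K) ∧ Function.Injective ec ∧
      (∀ a, ec a ≠ Fin.last n) ∧ ⊥ < tper (fun a b => tmod Wp Wn (er a) (ec b)))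
    (hEK : ∃ y : Fin (n + 1) → ℝ, toT y ∈ edgeEK Wp Wn K)
    (x : Fin (n + 1) → ℝ) (hx : toT x ∈ edgeEK Wp Wn K) :
    (CaseBasic Wp Wn K x ∨ CaseInterior Wp Wn K x ∨ CaseBreak Wp Wn K x) ∧
    ¬(CaseBasic Wp Wn K x ∧ CaseInterior Wp Wn K x) ∧
    ¬(CaseBasic Wp Wn K x ∧ CaseBreak Wp Wn K x) ∧
    ¬(CaseInterior Wp Wn K x ∧ CaseBreak Wp Wn K x) := by
  refine ⟨?_, ?_, ?_, ?_⟩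
  · rcases count_cases hsign hrow hgen hK hx with ⟨⟨l, hl, hH⟩, hR, h11⟩ |
      ⟨hH, hR, k, hk, hd, h11⟩ | ⟨hH, h11, u, hu, v, hv, huv, hw⟩
    · exact Or.inl (case1 hsign hrow hgen hx hl hH hR h11)
    · exact Or.inr (Or.inr (case2 hsign hrow hgen hfin hx hH hR hk hd h11))
    · exact Or.inr (Or.inl (case3 hsign hrow hgen hfin hx hH h11 hu hv huv hw))
  · rintro ⟨⟨l, hl, -, h1, -⟩, -, h2, -⟩
    exact hl ((h2 l).1 ((h1 l).2 (Finset.mem_insert_self _ _)))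
  · rintro ⟨⟨l, hl, -, h1, -⟩, -, h2, -⟩
    exact hl ((h2 l).1 ((h1 l).2 (Finset.mem_insert_self _ _)))
  · rintro ⟨⟨-, -, -, -, S, hS, ⟨u, hu⟩, ⟨v, hv⟩, h, -⟩, -, -, -, hR, -⟩
    exact hv.2 (((h u v (hS hu) hv.1).1 (hR u v (hS hu) hv.1)).1 hu)
end
end
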